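/- (Theorem 16) Let 0 < θ, θ₁ < 1, 0 < r, r₀, r₁, q₁ ≤ ∞, a, a₁, b₀, b₁ ∈ SV, ‖s^{-1/r₀} b₀(s)‖_{r₀,(1,∞)} < ∞, and ‖s^{-1/r₁} b₁(s)/a₁(s)‖_{r₁,(1,∞)} < ∞. Put c₀(t) = ‖s^{-1/r₀} b₀(s)‖_{r₀,(t,∞)}, c₁(t) = a₁(t) ‖s^{-1/r₁} b₁(s)/a₁(s)‖_{r₁,(t,∞)}, and ρ(t) = t^{θ₁} c₀(t)/c₁(t). Then (Ā_{0,r₀;b₀}, Ā^𝓛_{θ₁,r₁,b₁,q₁,a₁})_{θ,r;a} ≅ Ā_{η,r;a^#}, where η = θθ₁ and a^#(t) = c₀(t)^{1-θ} c₁(t)^θ a(ρ(t)). -/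

import Mathlib

open MeasureTheory Set ENNReal Filter

noncomputable section

/-- The `L_q` quasi-norm (with respect to Lebesgue measure) of an `ℝ≥0∞`-valued
function over a set of reals; for `q = ∞` it is the essential supremum. -/
def LqNorm (q : ℝ≥0∞) (s : Set ℝ) (g : ℝ → ℝ≥0∞) : ℝ≥0∞ :=
  if q = ∞ then essSup g (volume.restrict s)
  else (∫⁻ t in s, g t ^ q.toReal) ^ q⁻¹.toReal

/-- The weight `s ↦ s ^ (-1/r) * b s`, as an `ℝ≥0∞`-valued function
(`1/∞ = 0` by convention). -/
def svWgt (r : ℝ≥0∞) (b : ℝ → ℝ) : ℝ → ℝ≥0∞ :=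
  fun s => ENNReal.ofReal (s ^ (-(r⁻¹.toReal)) * b s)

/-- `f` and `g` are equivalent on `s`: each is bounded by a constant multiple
of the other there. -/
def EquivOn (s : Set ℝ) (f g : ℝ → ℝ) : Prop :=
  ∃ C : ℝ, 0 < C ∧ ∀ t ∈ s, C⁻¹ * g t ≤ f t ∧ f t ≤ C * g t

/-- A positive measurable function `b` on `(0,∞)` is slowly varying if for every
`ε > 0`, `t ^ ε * b t` is equivalent to a non-decreasing function and
`t ^ (-ε) * b t` is equivalent to a non-increasing function. -/
def SlowlyVarying (b : ℝ → ℝ) : Prop :=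
  AEMeasurable b (volume.restrict (Ioi 0)) ∧ (∀ t ∈ Ioi (0:ℝ), 0 < b t) ∧
    ∀ ε : ℝ, 0 < ε →
      (∃ g : ℝ → ℝ, MonotoneOn g (Ioi 0) ∧ EquivOn (Ioi 0) (fun t => t ^ ε * b t) g) ∧
      (∃ g : ℝ → ℝ, AntitoneOn g (Ioi 0) ∧ EquivOn (Ioi 0) (fun t => t ^ (-ε) * b t) g)

/-- A quasi-Banach space continuously embedded into the ambient (Hausdorff) space `E`,
recorded via its extended-real-valued quasi-norm; the space itself is the set of
vectors of finite quasi-norm. -/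
structure QuasiBanach (E : Type*) [AddCommGroup E] [Module ℝ E] where
  N : E → ℝ≥0∞
  zero : N 0 = 0
  definite : ∀ x, N x = 0 → x = 0
  smul : ∀ (c : ℝ) (x : E), N (c • x) = ENNReal.ofReal |c| * N x
  quasi : ∃ C : ℝ≥0∞, 1 ≤ C ∧ C ≠ ∞ ∧ ∀ x y, N (x + y) ≤ C * (N x + N y)
  complete : ∀ f : ℕ → E,
    (∀ ε : ℝ≥0∞, 0 < ε → ∃ M : ℕ, ∀ m ≥ M, ∀ n ≥ M, N (f m - f n) < ε) →
    (∀ n, N (f n) ≠ ∞) →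
    ∃ g : E, N g ≠ ∞ ∧ Tendsto (fun n => N (f n - g)) atTop (nhds 0)

variable {E : Type*} [AddCommGroup E] [Module ℝ E]

/-- The Peetre K-functional of the couple whose quasi-norms are `N₀`, `N₁`. -/
def Kf (N₀ N₁ : E → ℝ≥0∞) (t : ℝ) (f : E) : ℝ≥0∞ :=
  ⨅ g : E, N₀ g + ENNReal.ofReal t * N₁ (f - g)

/-- The quasi-norm of the real interpolation space `Ā_{θ,q;b}`. -/
def normK (N₀ N₁ : E → ℝ≥0∞) (θ : ℝ) (q : ℝ≥0∞) (b : ℝ → ℝ) (f : E) : ℝ≥0∞ :=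
  LqNorm q (Ioi 0) fun u =>
    ENNReal.ofReal (u ^ (-θ - q⁻¹.toReal) * b u) * Kf N₀ N₁ u f

/-- The quasi-norm of the limiting interpolation space `Ā^𝓛_{σ,r,b,q,a}`. -/
def normL (N₀ N₁ : E → ℝ≥0∞) (σ : ℝ) (r q : ℝ≥0∞) (b a : ℝ → ℝ) (f : E) : ℝ≥0∞ :=
  LqNorm r (Ioi 0) fun t =>
    ENNReal.ofReal (t ^ (-(r⁻¹.toReal)) * (b t / a t)) *
      LqNorm q (Ioo 0 t) fun u =>
        ENNReal.ofReal (u ^ (-σ - q⁻¹.toReal) * a u) * Kf N₀ N₁ u f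

/-- The quasi-norm of the limiting interpolation space `Ā^𝓡_{σ,r,b,q,a}`. -/
def normR (N₀ N₁ : E → ℝ≥0∞) (σ : ℝ) (r q : ℝ≥0∞) (b a : ℝ → ℝ) (f : E) : ℝ≥0∞ :=
  LqNorm r (Ioi 0) fun t =>
    ENNReal.ofReal (t ^ (-(r⁻¹.toReal)) * (b t / a t)) *
      LqNorm q (Ioi t) fun u =>
        ENNReal.ofReal (u ^ (-σ - q⁻¹.toReal) * a u) * Kf N₀ N₁ u f

/-- Two (extended-real-valued) quasi-norms define the same space with
equivalent quasi-norms. -/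
def EquivNorms (nX nY : E → ℝ≥0∞) : Prop :=
  ∃ C : ℝ≥0∞, 0 < C ∧ C ≠ ∞ ∧ ∀ f : E, C⁻¹ * nY f ≤ nX f ∧ nX f ≤ C * nY f


lemma LqNorm_top (s : Set ℝ) (g : ℝ → ℝ≥0∞) :
    LqNorm ∞ s g = essSup g (volume.restrict s) := by simp [LqNorm]

lemma LqNorm_fin {q : ℝ≥0∞} (h : q ≠ ∞) (s : Set ℝ) (g : ℝ → ℝ≥0∞) :
    LqNorm q s g = (∫⁻ t in s, g t ^ q.toReal) ^ (q.toReal)⁻¹ := by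
  simp [LqNorm, h, ENNReal.toReal_inv]

lemma LqNorm_mono {q : ℝ≥0∞} {s : Set ℝ} (hs : MeasurableSet s) {g h : ℝ → ℝ≥0∞}
    (H : ∀ u ∈ s, g u ≤ h u) : LqNorm q s g ≤ LqNorm q s h := by
  by_cases hq : q = ∞
  · subst hq
    rw [LqNorm_top, LqNorm_top]
    exact essSup_mono_ae (ae_restrict_of_forall_mem hs H)
  · rw [LqNorm_fin hq, LqNorm_fin hq]
    apply ENNReal.rpow_le_rpow _ (by positivity)
    apply setLIntegral_mono' hs
    intro x hx
    exact ENNReal.rpow_le_rpow (H x hx) (by positivity)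

lemma LqNorm_mono_set {q : ℝ≥0∞} {s t : Set ℝ} (hst : s ⊆ t) (g : ℝ → ℝ≥0∞) :
    LqNorm q s g ≤ LqNorm q t g := by
  by_cases hq : q = ∞
  · subst hq
    rw [LqNorm_top, LqNorm_top]
    exact essSup_mono_measure (Measure.absolutelyContinuous_of_le (Measure.restrict_mono hst le_rfl))
  · rw [LqNorm_fin hq, LqNorm_fin hq]
    apply ENNReal.rpow_le_rpow _ (by positivity)
    exact lintegral_mono_set hst

lemma LqNorm_const_mul_le {q : ℝ≥0∞} (h0 : 0 < q) (s : Set ℝ) (c : ℝ≥0∞) (g : ℝ → ℝ≥0∞) :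
    c * LqNorm q s g ≤ LqNorm q s (fun u => c * g u) := by
  by_cases hq : q = ∞
  · subst hq
    rw [LqNorm_top, LqNorm_top, ENNReal.essSup_const_mul]
  · have hp : 0 < q.toReal := ENNReal.toReal_pos h0.ne' hq
    rw [LqNorm_fin hq, LqNorm_fin hq]
    have : c * (∫⁻ t in s, g t ^ q.toReal) ^ (q.toReal)⁻¹
        = (c ^ q.toReal * ∫⁻ t in s, g t ^ q.toReal) ^ (q.toReal)⁻¹ := by
      rw [ENNReal.mul_rpow_of_nonneg _ _ (by positivity), ENNReal.rpow_rpow_inv hp.ne']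
    rw [this]
    apply ENNReal.rpow_le_rpow _ (by positivity)
    simp_rw [ENNReal.mul_rpow_of_nonneg _ _ hp.le]
    exact lintegral_const_mul_le _ _

lemma LqNorm_const_mul {q : ℝ≥0∞} (h0 : 0 < q) (s : Set ℝ) {c : ℝ≥0∞} (hc : c ≠ ∞)
    (g : ℝ → ℝ≥0∞) :
    LqNorm q s (fun u => c * g u) = c * LqNorm q s g := by
  by_cases hq : q = ∞
  · subst hq
    rw [LqNorm_top, LqNorm_top, ENNReal.essSup_const_mul]
  · have hp : 0 < q.toReal := ENNReal.toReal_pos h0.ne' hq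
    rw [LqNorm_fin hq, LqNorm_fin hq]
    simp_rw [ENNReal.mul_rpow_of_nonneg _ _ hp.le]
    rw [lintegral_const_mul' _ _ (ENNReal.rpow_ne_top_of_nonneg hp.le hc),
      ENNReal.mul_rpow_of_nonneg _ _ (by positivity), ENNReal.rpow_rpow_inv hp.ne']

/-- splitting of the half line -/
lemma LqNorm_split (q : ℝ≥0∞) : ∃ C : ℝ≥0∞, 1 ≤ C ∧ C ≠ ∞ ∧
    ∀ (a t : ℝ) (g : ℝ → ℝ≥0∞), a ≤ t →
      LqNorm q (Ioi a) g ≤ C * (LqNorm q (Ioo a t) g + LqNorm q (Ioi t) g) := by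
  by_cases hq : q = ∞
  · subst hq
    refine ⟨1, le_rfl, by simp, ?_⟩
    intro a t g hat
    simp only [LqNorm_top, one_mul]
    refine essSup_le_of_ae_le _ ?_
    have h1 := (ae_restrict_iff' measurableSet_Ioo).1
      (ENNReal.ae_le_essSup (μ := volume.restrict (Ioo a t)) g)
    have h2 := (ae_restrict_iff' measurableSet_Ioi).1
      (ENNReal.ae_le_essSup (μ := volume.restrict (Ioi t)) g)
    have h3 : ∀ᵐ x : ℝ, x ≠ t := Measure.ae_ne volume t
    rw [EventuallyLE, ae_restrict_iff' measurableSet_Ioi]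
    filter_upwards [h1, h2, h3] with x hx1 hx2 hx3 hx
    rcases lt_or_gt_of_ne hx3 with h | h
    · exact (hx1 ⟨hx, h⟩).trans le_self_add
    · exact (hx2 h).trans le_add_self
  · set p := (q.toReal)⁻¹ with hp
    have hp0 : 0 ≤ p := by positivity
    refine ⟨2 ^ p, ?_, by simp, ?_⟩
    · simpa using ENNReal.rpow_le_rpow (z := p) (show (1:ℝ≥0∞) ≤ 2 by norm_num) hp0
    intro a t g hat
    rw [LqNorm_fin hq, LqNorm_fin hq, LqNorm_fin hq, ← hp]
    set F := fun t => g t ^ q.toReal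
    have h1 : ∫⁻ u in Ioi a, F u ≤ (∫⁻ u in Ioo a t, F u) + ∫⁻ u in Ioi t, F u := by
      have : ∫⁻ u in Ioi a, F u = ∫⁻ u in Ioc a t ∪ Ioi t, F u := by
        rw [Ioc_union_Ioi_eq_Ioi hat]
      rw [this, setLIntegral_congr (Ioo_ae_eq_Ioc (a := a) (b := t))]
      exact lintegral_union_le _ _ _
    set x := ∫⁻ u in Ioo a t, F u
    set y := ∫⁻ u in Ioi t, F u
    calc _ ≤ (x + y) ^ p := ENNReal.rpow_le_rpow h1 hp0
      _ ≤ (2 * max x y) ^ p := by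
          apply ENNReal.rpow_le_rpow _ hp0
          rw [two_mul]
          exact add_le_add (le_max_left _ _) (le_max_right _ _)
      _ = 2 ^ p * (max x y) ^ p := ENNReal.mul_rpow_of_nonneg _ _ hp0
      _ ≤ _ := by
          gcongr
          rcases le_total x y with h | h
          · rw [max_eq_right h]; exact le_add_self
          · rw [max_eq_left h]; exact le_self_add

/-- lower bound on dyadic interval -/
lemma LqNorm_low (q : ℝ≥0∞) (h0 : 0 < q) : ∃ C : ℝ≥0∞, 1 ≤ C ∧ C ≠ ∞ ∧
    ∀ (t : ℝ) (A : ℝ≥0∞) (g : ℝ → ℝ≥0∞), 0 < t →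
      (∀ u ∈ Ioo t (2 * t), ENNReal.ofReal (u ^ (-(q⁻¹.toReal))) * A ≤ g u) →
      A ≤ C * LqNorm q (Ioo t (2 * t)) g := by
  by_cases hq : q = ∞
  · subst hq
    refine ⟨1, le_rfl, by simp, ?_⟩
    intro t A g ht hg
    simp only [ENNReal.inv_top, ENNReal.toReal_zero, neg_zero, Real.rpow_zero, ENNReal.ofReal_one,
      one_mul] at hg ⊢
    refine le_trans ?_ (LqNorm_mono measurableSet_Ioo hg)
    rw [LqNorm_top, essSup_const]
    intro h
    have := congrArg (fun μ => μ univ) h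
    simp at this
    linarith
  · have hp : 0 < q.toReal := ENNReal.toReal_pos h0.ne' hq
    set p := q.toReal with hpd
    refine ⟨ENNReal.ofReal (2 ^ p⁻¹), ?_, by simp, ?_⟩
    · rw [ENNReal.one_le_ofReal]
      exact Real.one_le_rpow (by norm_num) (by positivity)
    intro t A g ht hg
    have h1 : LqNorm q (Ioo t (2 * t)) (fun _ => ENNReal.ofReal ((2 * t) ^ (-p⁻¹)) * A) ≤
        LqNorm q (Ioo t (2 * t)) g := by
      apply LqNorm_mono measurableSet_Ioo
      intro u hu
      refine le_trans ?_ (hg u hu)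
      rw [ENNReal.toReal_inv]
      gcongr ?_ * A
      apply ENNReal.ofReal_le_ofReal
      apply Real.rpow_le_rpow_of_nonpos (by linarith [hu.1]) hu.2.le
      simp only [neg_nonpos]; positivity
    have h2 : LqNorm q (Ioo t (2 * t)) (fun _ => ENNReal.ofReal ((2 * t) ^ (-p⁻¹)) * A)
        = ENNReal.ofReal ((2 * t) ^ (-p⁻¹)) * A * ENNReal.ofReal (t ^ p⁻¹) := by
      rw [LqNorm_fin hq]
      simp only [lintegral_const, MeasurableSet.univ, Measure.restrict_apply, univ_inter,
        Real.volume_Ioo]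
      rw [ENNReal.mul_rpow_of_nonneg _ _ (by positivity), ENNReal.rpow_rpow_inv hp.ne',
        show 2 * t - t = t by ring, ENNReal.ofReal_rpow_of_pos ht]
    rw [h2] at h1
    calc A = ENNReal.ofReal (2 ^ p⁻¹) * (ENNReal.ofReal ((2 * t) ^ (-p⁻¹)) * A * ENNReal.ofReal (t ^ p⁻¹)) := by
          rw [show ENNReal.ofReal (2 ^ p⁻¹) * (ENNReal.ofReal ((2 * t) ^ (-p⁻¹)) * A * ENNReal.ofReal (t ^ p⁻¹))
            = (ENNReal.ofReal (2 ^ p⁻¹) * ENNReal.ofReal ((2 * t) ^ (-p⁻¹)) * ENNReal.ofReal (t ^ p⁻¹)) * A by ring]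
          rw [← ENNReal.ofReal_mul (by positivity), ← ENNReal.ofReal_mul (by positivity)]
          rw [Real.mul_rpow (by norm_num) ht.le, Real.rpow_neg (by norm_num), Real.rpow_neg ht.le]
          rw [show (2:ℝ) ^ p⁻¹ * ((2 ^ p⁻¹)⁻¹ * (t ^ p⁻¹)⁻¹) * t ^ p⁻¹ = 1 by field_simp]
          simp
      _ ≤ _ := by gcongr

lemma LqNorm_pow0 (q : ℝ≥0∞) (h0 : 0 < q) (γ : ℝ) (hγ : 0 < γ) : ∃ C : ℝ≥0∞, 1 ≤ C ∧ C ≠ ∞ ∧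
    ∀ t : ℝ, 0 < t →
      LqNorm q (Ioo 0 t) (fun u => ENNReal.ofReal (u ^ (-(q⁻¹.toReal)) * (u / t) ^ γ)) ≤ C := by
  by_cases hq : q = ∞
  · subst hq
    refine ⟨1, le_rfl, by simp, ?_⟩
    intro t ht
    rw [LqNorm_top]
    refine essSup_le_of_ae_le _ ?_
    apply ae_restrict_of_forall_mem measurableSet_Ioo
    intro u hu
    simp only [ENNReal.inv_top, ENNReal.toReal_zero, neg_zero, Real.rpow_zero, one_mul]
    rw [ENNReal.ofReal_le_one]
    exact Real.rpow_le_one (div_nonneg hu.1.le ht.le) ((div_le_one ht).2 hu.2.le) hγ.le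
  · have hp : 0 < q.toReal := ENNReal.toReal_pos h0.ne' hq
    set p := q.toReal with hpd
    refine ⟨max 1 (ENNReal.ofReal ((γ * p)⁻¹ ^ p⁻¹)), le_max_left _ _, by simp, ?_⟩
    intro t ht
    refine le_trans ?_ (le_max_right _ _)
    rw [LqNorm_fin hq, ← hpd, ENNReal.toReal_inv, ← hpd]
    rw [← ENNReal.ofReal_rpow_of_pos (by positivity)]
    apply ENNReal.rpow_le_rpow _ (by positivity)
    have h_integ : IntegrableOn (fun u : ℝ => t ^ (-(γ * p)) * u ^ (γ * p - 1)) (Ioo 0 t) := by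
      have := (intervalIntegral.intervalIntegrable_rpow' (a := 0) (b := t) (r := γ * p - 1)
        (by nlinarith [mul_pos hγ hp])).const_mul (t ^ (-(γ * p)))
      rw [intervalIntegrable_iff_integrableOn_Ioo_of_le ht.le] at this
      exact this
    have heq : ∫⁻ u in Ioo 0 t, ENNReal.ofReal (u ^ (-p⁻¹) * (u / t) ^ γ) ^ p =
        ∫⁻ u in Ioo 0 t, ENNReal.ofReal (t ^ (-(γ * p)) * u ^ (γ * p - 1)) := by
      apply setLIntegral_congr_fun measurableSet_Ioo
      intro u hu
      have hu0 : 0 < u := hu.1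
      simp only
      rw [ENNReal.ofReal_rpow_of_pos (by positivity)]
      congr 1
      rw [Real.mul_rpow (by positivity) (by positivity), ← Real.rpow_mul hu0.le, ← Real.rpow_mul (by positivity),
        Real.div_rpow hu0.le ht.le, Real.rpow_sub hu0, Real.rpow_neg ht.le, neg_mul, inv_mul_cancel₀ hp.ne',
        Real.rpow_neg_one, Real.rpow_one]
      field_simp
    rw [heq, ← ofReal_integral_eq_lintegral_ofReal h_integ]
    · apply ENNReal.ofReal_le_ofReal
      rw [← integral_Ioc_eq_integral_Ioo, ← intervalIntegral.integral_of_le ht.le,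
        intervalIntegral.integral_const_mul, integral_rpow (Or.inl (by nlinarith [mul_pos hγ hp]))]
      rw [sub_add_cancel, Real.zero_rpow (by positivity), Real.rpow_neg ht.le]
      have : 0 < t ^ (γ * p) := by positivity
      apply le_of_eq
      field_simp
      simp
    · apply ae_restrict_of_forall_mem measurableSet_Ioo
      intro u hu
      have hu0 : 0 < u := hu.1
      simp only [Pi.zero_apply]
      positivity

lemma LqNorm_powinf (q : ℝ≥0∞) (h0 : 0 < q) (γ : ℝ) (hγ : 0 < γ) : ∃ C : ℝ≥0∞, 1 ≤ C ∧ C ≠ ∞ ∧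
    ∀ t : ℝ, 0 < t →
      LqNorm q (Ioi t) (fun u => ENNReal.ofReal (u ^ (-(q⁻¹.toReal)) * (t / u) ^ γ)) ≤ C := by
  by_cases hq : q = ∞
  · subst hq
    refine ⟨1, le_rfl, by simp, ?_⟩
    intro t ht
    rw [LqNorm_top]
    refine essSup_le_of_ae_le _ ?_
    apply ae_restrict_of_forall_mem measurableSet_Ioi
    intro u hu
    have hu0 : 0 < u := ht.trans hu
    simp only [ENNReal.inv_top, ENNReal.toReal_zero, neg_zero, Real.rpow_zero, one_mul]
    rw [ENNReal.ofReal_le_one]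
    exact Real.rpow_le_one (div_nonneg ht.le hu0.le) ((div_le_one hu0).2 (le_of_lt hu)) hγ.le
  · have hp : 0 < q.toReal := ENNReal.toReal_pos h0.ne' hq
    set p := q.toReal with hpd
    refine ⟨max 1 (ENNReal.ofReal ((γ * p)⁻¹ ^ p⁻¹)), le_max_left _ _, by simp, ?_⟩
    intro t ht
    refine le_trans ?_ (le_max_right _ _)
    rw [LqNorm_fin hq, ← hpd, ENNReal.toReal_inv, ← hpd]
    rw [← ENNReal.ofReal_rpow_of_pos (by positivity)]
    apply ENNReal.rpow_le_rpow _ (by positivity)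
    have hneg : -(γ * p) - 1 < -1 := by nlinarith [mul_pos hγ hp]
    have h_integ : IntegrableOn (fun u : ℝ => t ^ (γ * p) * u ^ (-(γ * p) - 1)) (Ioi t) :=
      (integrableOn_Ioi_rpow_of_lt hneg ht).const_mul _
    have heq : ∫⁻ u in Ioi t, ENNReal.ofReal (u ^ (-p⁻¹) * (t / u) ^ γ) ^ p =
        ∫⁻ u in Ioi t, ENNReal.ofReal (t ^ (γ * p) * u ^ (-(γ * p) - 1)) := by
      apply setLIntegral_congr_fun measurableSet_Ioi
      intro u hu
      have hu0 : 0 < u := ht.trans hu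
      simp only
      rw [ENNReal.ofReal_rpow_of_pos (by positivity)]
      congr 1
      rw [Real.mul_rpow (by positivity) (by positivity), ← Real.rpow_mul hu0.le, ← Real.rpow_mul (by positivity),
        Real.div_rpow ht.le hu0.le, Real.rpow_sub hu0, Real.rpow_neg hu0.le (γ * p), neg_mul, inv_mul_cancel₀ hp.ne',
        Real.rpow_neg_one, Real.rpow_one]
      field_simp
    rw [heq, ← ofReal_integral_eq_lintegral_ofReal h_integ]
    · apply ENNReal.ofReal_le_ofReal
      rw [integral_const_mul, integral_Ioi_rpow_of_lt hneg ht]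
      rw [sub_add_cancel, Real.rpow_neg ht.le]
      have : 0 < t ^ (γ * p) := by positivity
      apply le_of_eq
      field_simp
    · apply ae_restrict_of_forall_mem measurableSet_Ioi
      intro u hu
      have hu0 : 0 < u := ht.trans hu
      simp only [Pi.zero_apply]
      positivity

lemma LqNorm_le_of_le {q : ℝ≥0∞} (h0 : 0 < q) {s : Set ℝ} (hs : MeasurableSet s)
    {C A : ℝ≥0∞} (hC : 1 ≤ C) {g w : ℝ → ℝ≥0∞} (hw : LqNorm q s w ≤ C)
    (H : ∀ u ∈ s, g u ≤ w u * A) : LqNorm q s g ≤ C * A := by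
  by_cases hA : A = ∞
  · subst hA
    rw [ENNReal.mul_top (by positivity)]
    exact le_top
  · calc _ ≤ LqNorm q s (fun u => A * w u) := LqNorm_mono hs (fun u hu => by rw [mul_comm]; exact H u hu)
      _ = A * LqNorm q s w := LqNorm_const_mul h0 s hA w
      _ ≤ C * A := by rw [mul_comm]; gcongr

lemma LqNorm_up0 (q : ℝ≥0∞) (h0 : 0 < q) (γ : ℝ) (hγ : 0 < γ) : ∃ C : ℝ≥0∞, 1 ≤ C ∧ C ≠ ∞ ∧
    ∀ (t : ℝ) (A : ℝ≥0∞) (g : ℝ → ℝ≥0∞), 0 < t →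
      (∀ u ∈ Ioo 0 t, g u ≤ ENNReal.ofReal (u ^ (-(q⁻¹.toReal)) * (u / t) ^ γ) * A) →
      LqNorm q (Ioo 0 t) g ≤ C * A := by
  obtain ⟨C, h1, h2, h3⟩ := LqNorm_pow0 q h0 γ hγ
  exact ⟨C, h1, h2, fun t A g ht H => LqNorm_le_of_le h0 measurableSet_Ioo h1 (h3 t ht) H⟩

lemma LqNorm_upinf (q : ℝ≥0∞) (h0 : 0 < q) (γ : ℝ) (hγ : 0 < γ) : ∃ C : ℝ≥0∞, 1 ≤ C ∧ C ≠ ∞ ∧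
    ∀ (t : ℝ) (A : ℝ≥0∞) (g : ℝ → ℝ≥0∞), 0 < t →
      (∀ u ∈ Ioi t, g u ≤ ENNReal.ofReal (u ^ (-(q⁻¹.toReal)) * (t / u) ^ γ) * A) →
      LqNorm q (Ioi t) g ≤ C * A := by
  obtain ⟨C, h1, h2, h3⟩ := LqNorm_powinf q h0 γ hγ
  exact ⟨C, h1, h2, fun t A g ht H => LqNorm_le_of_le h0 measurableSet_Ioi h1 (h3 t ht) H⟩


/-- Power-type growth bounds (in logarithmic form). -/
def PB (f : ℝ → ℝ) (α β : ℝ) : Prop :=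
  (∀ t, 0 < t → 0 < f t) ∧ ∃ C : ℝ, ∀ t s, 0 < t → t ≤ s →
    α * (Real.log s - Real.log t) - C ≤ Real.log (f s) - Real.log (f t) ∧
    Real.log (f s) - Real.log (f t) ≤ β * (Real.log s - Real.log t) + C

def SVB (f : ℝ → ℝ) : Prop := ∀ ε : ℝ, 0 < ε → PB f (-ε) ε

lemma PB.mono {f : ℝ → ℝ} {α β α' β' : ℝ} (h : PB f α β) (h1 : α' ≤ α) (h2 : β ≤ β') :
    PB f α' β' := by
  obtain ⟨hp, C, hC⟩ := h
  refine ⟨hp, C, fun t s ht hts => ?_⟩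
  have hl : 0 ≤ Real.log s - Real.log t := sub_nonneg.2 (Real.log_le_log ht hts)
  obtain ⟨h3, h4⟩ := hC t s ht hts
  exact ⟨by nlinarith, by nlinarith⟩

lemma PB.congr {f g : ℝ → ℝ} {α β : ℝ} (h : PB f α β) (hfg : ∀ t, 0 < t → g t = f t) :
    PB g α β := by
  obtain ⟨hp, C, hC⟩ := h
  refine ⟨fun t ht => by rw [hfg t ht]; exact hp t ht, C, fun t s ht hts => ?_⟩
  rw [hfg t ht, hfg s (ht.trans_le hts)]
  exact hC t s ht hts

lemma PB.mul {f g : ℝ → ℝ} {α β α' β' : ℝ} (h : PB f α β) (h' : PB g α' β') :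
    PB (fun t => f t * g t) (α + α') (β + β') := by
  obtain ⟨hp, C, hC⟩ := h
  obtain ⟨hp', C', hC'⟩ := h'
  refine ⟨fun t ht => mul_pos (hp t ht) (hp' t ht), C + C', fun t s ht hts => ?_⟩
  have hs := ht.trans_le hts
  simp only
  rw [Real.log_mul (hp t ht).ne' (hp' t ht).ne', Real.log_mul (hp s hs).ne' (hp' s hs).ne']
  obtain ⟨h3, h4⟩ := hC t s ht hts
  obtain ⟨h5, h6⟩ := hC' t s ht hts
  exact ⟨by linarith, by linarith⟩

lemma PB.rpow_nonneg {f : ℝ → ℝ} {α β p : ℝ} (h : PB f α β) (hp0 : 0 ≤ p) :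
    PB (fun t => f t ^ p) (p * α) (p * β) := by
  obtain ⟨hp, C, hC⟩ := h
  refine ⟨fun t ht => Real.rpow_pos_of_pos (hp t ht) _, p * C, fun t s ht hts => ?_⟩
  have hs := ht.trans_le hts
  simp only
  rw [Real.log_rpow (hp t ht), Real.log_rpow (hp s hs)]
  obtain ⟨h3, h4⟩ := hC t s ht hts
  exact ⟨by nlinarith, by nlinarith⟩

lemma PB.inv {f : ℝ → ℝ} {α β : ℝ} (h : PB f α β) :
    PB (fun t => (f t)⁻¹) (-β) (-α) := by
  obtain ⟨hp, C, hC⟩ := h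
  refine ⟨fun t ht => inv_pos.2 (hp t ht), C, fun t s ht hts => ?_⟩
  simp only
  rw [Real.log_inv, Real.log_inv]
  obtain ⟨h3, h4⟩ := hC t s ht hts
  exact ⟨by linarith, by linarith⟩

lemma PB.pow_id (σ : ℝ) : PB (fun t => t ^ σ) σ σ := by
  refine ⟨fun t ht => Real.rpow_pos_of_pos ht _, 0, fun t s ht hts => ?_⟩
  simp only
  rw [Real.log_rpow ht, Real.log_rpow (ht.trans_le hts)]
  exact ⟨by linarith, by linarith⟩

lemma SVB.mul {f g : ℝ → ℝ} (hf : SVB f) (hg : SVB g) : SVB (fun t => f t * g t) := by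
  intro ε hε
  exact ((hf (ε/2) (by linarith)).mul (hg (ε/2) (by linarith))).mono (by linarith) (by linarith)

lemma SVB.inv {f : ℝ → ℝ} (hf : SVB f) : SVB (fun t => (f t)⁻¹) := by
  intro ε hε
  exact (hf ε hε).inv.mono (by linarith) (by linarith)

lemma SVB.div {f g : ℝ → ℝ} (hf : SVB f) (hg : SVB g) : SVB (fun t => f t / g t) := by
  simpa only [div_eq_mul_inv] using hf.mul hg.inv

lemma SVB.pos {f : ℝ → ℝ} (hf : SVB f) : ∀ t, 0 < t → 0 < f t := (hf 1 one_pos).1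

lemma SVB.comp {f ρ : ℝ → ℝ} {α β : ℝ} (hf : SVB f) (hρ : PB ρ α β) : SVB (fun t => f (ρ t)) := by
  intro ε hε
  obtain ⟨hp, C, hC⟩ := hρ
  set m := |α| + |β| + 1 with hm
  have hm0 : 0 < m := by positivity
  obtain ⟨hq, D, hD⟩ := hf (ε / m) (by positivity)
  refine ⟨fun t ht => hq _ (hp t ht), ε / m * |C| + D, fun t s ht hts => ?_⟩
  have hs := ht.trans_le hts
  have hl : 0 ≤ Real.log s - Real.log t := sub_nonneg.2 (Real.log_le_log ht hts)
  obtain ⟨h3, h4⟩ := hC t s ht hts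
  have hem : 0 < ε / m := by positivity
  have heq : ε = ε / m * m := by field_simp
  set e := ε / m
  have key : |Real.log (ρ s) - Real.log (ρ t)| ≤ m * (Real.log s - Real.log t) + |C| := by
    rw [abs_le]
    have := neg_abs_le α
    have := le_abs_self β
    have := le_abs_self C
    have := abs_nonneg α
    have := abs_nonneg β
    constructor <;> nlinarith
  have key2 : |Real.log (f (ρ s)) - Real.log (f (ρ t))| ≤ e * |Real.log (ρ s) - Real.log (ρ t)| + D := by
    rcases le_total (ρ t) (ρ s) with h | h
    · have h5 := hD (ρ t) (ρ s) (hp t ht) h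
      have : 0 ≤ Real.log (ρ s) - Real.log (ρ t) := sub_nonneg.2 (Real.log_le_log (hp t ht) h)
      rw [abs_of_nonneg this, abs_le]
      constructor <;> linarith [h5.1, h5.2]
    · have h5 := hD (ρ s) (ρ t) (hp s hs) h
      have : Real.log (ρ s) - Real.log (ρ t) ≤ 0 := sub_nonpos.2 (Real.log_le_log (hp s hs) h)
      rw [abs_of_nonpos this, abs_le]
      constructor <;> linarith [h5.1, h5.2]
  have key3 : e * |Real.log (ρ s) - Real.log (ρ t)| ≤ e * (m * (Real.log s - Real.log t) + |C|) :=
    mul_le_mul_of_nonneg_left key hem.le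
  rw [abs_le] at key2
  rw [heq]
  constructor <;> nlinarith [key2.1, key2.2]

lemma SVB.of_sv {b : ℝ → ℝ} (h : SlowlyVarying b) : SVB b := by
  intro ε hε
  obtain ⟨-, hp, h⟩ := h
  obtain ⟨⟨g, hg, C, hC, hgC⟩, ⟨g', hg', C', hC', hgC'⟩⟩ := h ε hε
  refine ⟨fun t ht => hp t ht, 2 * |Real.log C| + 2 * |Real.log C'|, fun t s ht hts => ?_⟩
  have hs := ht.trans_le hts
  have a1 := neg_abs_le (Real.log C)
  have a2 := le_abs_self (Real.log C)
  have a3 := neg_abs_le (Real.log C')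
  have a4 := le_abs_self (Real.log C')
  have hbt := hp t ht
  have hbs := hp s hs
  constructor
  · have h1 : t ^ ε * b t ≤ C * (C * (s ^ ε * b s)) := by
      refine (hgC t ht).2.trans ?_
      apply mul_le_mul_of_nonneg_left _ hC.le
      refine (hg ht hs hts).trans ?_
      have := (hgC s hs).1
      rwa [inv_mul_le_iff₀ hC] at this
    have hts' : 0 < t ^ ε := by positivity
    have hss' : 0 < s ^ ε := by positivity
    have h2 := Real.log_le_log (by positivity) h1
    rw [Real.log_mul hts'.ne' hbt.ne', Real.log_mul hC.ne' (by positivity),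
      Real.log_mul hC.ne' (by positivity), Real.log_mul hss'.ne' hbs.ne',
      Real.log_rpow ht, Real.log_rpow hs] at h2
    linarith
  · have h1 : s ^ (-ε) * b s ≤ C' * (C' * (t ^ (-ε) * b t)) := by
      refine (hgC' s hs).2.trans ?_
      apply mul_le_mul_of_nonneg_left _ hC'.le
      refine (hg' ht hs hts).trans ?_
      have := (hgC' t ht).1
      rwa [inv_mul_le_iff₀ hC'] at this
    have hts' : 0 < t ^ (-ε) := by positivity
    have hss' : 0 < s ^ (-ε) := by positivity
    have h2 := Real.log_le_log (by positivity) h1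
    rw [Real.log_mul hss'.ne' hbs.ne', Real.log_mul hC'.ne' (by positivity),
      Real.log_mul hC'.ne' (by positivity), Real.log_mul hts'.ne' hbt.ne',
      Real.log_rpow ht, Real.log_rpow hs] at h2
    linarith

lemma le_of_log_le {x y : ℝ} (hx : 0 < x) (hy : 0 < y) (h : Real.log x ≤ Real.log y) : x ≤ y :=
  (Real.log_le_log_iff hx hy).1 h

lemma PB.bounds {f : ℝ → ℝ} {α β : ℝ} (h : PB f α β) :
    ∃ C : ℝ, 1 ≤ C ∧ ∀ t s, 0 < t → t ≤ s →
      f s ≤ C * (t / s) ^ (-β) * f t ∧ f t ≤ C * (t / s) ^ α * f s := by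
  obtain ⟨hp, C, hC⟩ := h
  refine ⟨Real.exp |C|, Real.one_le_exp (abs_nonneg C), fun t s ht hts => ?_⟩
  have hs := ht.trans_le hts
  have hft := hp t ht
  have hfs := hp s hs
  have a2 := le_abs_self C
  obtain ⟨h3, h4⟩ := hC t s ht hts
  have hd : 0 < t / s := by positivity
  constructor
  · apply le_of_log_le hfs (by positivity)
    rw [Real.log_mul (by positivity) hft.ne', Real.log_mul (by positivity) (by positivity),
      Real.log_exp, Real.log_rpow hd, Real.log_div ht.ne' hs.ne']
    linarith
  · apply le_of_log_le hft (by positivity)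
    rw [Real.log_mul (by positivity) hfs.ne', Real.log_mul (by positivity) (by positivity),
      Real.log_exp, Real.log_rpow hd, Real.log_div ht.ne' hs.ne']
    linarith

/-- doubling form -/
lemma PB.doubling {f : ℝ → ℝ} {α β : ℝ} (h : PB f α β) (M : ℝ) (hM : 1 ≤ M) :
    ∃ C : ℝ, 1 ≤ C ∧ ∀ t s, 0 < t → 0 < s → t ≤ M * s → s ≤ M * t → f s ≤ C * f t := by
  obtain ⟨hp, C, hC⟩ := h
  refine ⟨Real.exp (|C| + (|α| + |β|) * Real.log M), Real.one_le_exp ?_, fun t s ht hs h1 h2 => ?_⟩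
  · have := Real.log_nonneg hM
    positivity
  have hft := hp t ht
  have hfs := hp s hs
  have a2 := le_abs_self C
  have hM0 : 0 < M := by linarith
  have hM1 := Real.log_nonneg hM
  have l1 := Real.log_le_log ht h1
  have l2 := Real.log_le_log hs h2
  rw [Real.log_mul hM0.ne' hs.ne'] at l1
  rw [Real.log_mul hM0.ne' ht.ne'] at l2
  apply le_of_log_le hfs (by positivity)
  rw [Real.log_mul (by positivity) hft.ne', Real.log_exp]
  have := neg_abs_le α
  have := le_abs_self β
  have := abs_nonneg α
  have := abs_nonneg β
  rcases le_total t s with h | h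
  · obtain ⟨h3, h4⟩ := hC t s ht h
    have hl : 0 ≤ Real.log s - Real.log t := sub_nonneg.2 (Real.log_le_log ht h)
    have : β * (Real.log s - Real.log t) ≤ |β| * Real.log M := by
      apply mul_le_mul <;> linarith
    nlinarith
  · obtain ⟨h3, h4⟩ := hC s t hs h
    have hl : 0 ≤ Real.log t - Real.log s := sub_nonneg.2 (Real.log_le_log hs h)
    have : (-α) * (Real.log t - Real.log s) ≤ |α| * Real.log M := by
      apply mul_le_mul <;> linarith
    nlinarith

lemma tail_ge {r : ℝ≥0∞} (hr : 0 < r) {b : ℝ → ℝ} (hb : SVB b) :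
    ∃ C : ℝ≥0∞, 1 ≤ C ∧ C ≠ ∞ ∧ ∀ t, 0 < t →
      ENNReal.ofReal (b t) ≤ C * LqNorm r (Ioi t) (svWgt r b) := by
  obtain ⟨C, h1, h2, h3⟩ := LqNorm_low r hr
  obtain ⟨D, hD1, hD⟩ := (hb 1 one_pos).doubling 2 (by norm_num)
  refine ⟨C * ENNReal.ofReal D, ?_, ENNReal.mul_ne_top h2 (by simp), fun t ht => ?_⟩
  · exact one_le_mul h1 (by simpa using hD1)
  have hD0 : 0 < D := by linarith
  have := h3 t (ENNReal.ofReal (D⁻¹ * b t)) (svWgt r b) ht (fun u hu => by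
    have hu0 : 0 < u := ht.trans hu.1
    rw [svWgt, ← ENNReal.ofReal_mul (by positivity)]
    apply ENNReal.ofReal_le_ofReal
    gcongr
    rw [inv_mul_le_iff₀ hD0]
    exact hD u t hu0 ht (by linarith [hu.2]) (by linarith [hu.1]))
  calc ENNReal.ofReal (b t) = ENNReal.ofReal D * ENNReal.ofReal (D⁻¹ * b t) := by
        rw [← ENNReal.ofReal_mul hD0.le]; congr 1; field_simp
    _ ≤ ENNReal.ofReal D * (C * LqNorm r (Ioo t (2 * t)) (svWgt r b)) := by gcongr
    _ ≤ ENNReal.ofReal D * (C * LqNorm r (Ioi t) (svWgt r b)) := by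
        gcongr; exact LqNorm_mono_set Ioo_subset_Ioi_self _
    _ = _ := by ring

lemma tail_le {r : ℝ≥0∞} (hr : 0 < r) {b : ℝ → ℝ} (hb : SVB b) (ε : ℝ) (hε : 0 < ε) :
    ∃ C : ℝ, 1 ≤ C ∧ ∀ t s, 0 < t → t ≤ s →
      LqNorm r (Ioi t) (svWgt r b) ≤ ENNReal.ofReal (C * (t / s) ^ (-ε)) * LqNorm r (Ioi s) (svWgt r b) := by
  obtain ⟨S, hS1, hS2, hS⟩ := LqNorm_split r
  obtain ⟨U, hU1, hU2, hU⟩ := LqNorm_up0 r hr (ε/2) (by positivity)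
  obtain ⟨D, hD1, hD⟩ := (hb (ε/2) (by positivity)).bounds
  obtain ⟨G, hG1, hG2, hG⟩ := tail_ge hr hb
  have hfin : S * (U * (ENNReal.ofReal D * G) + 1) ≠ ∞ := by
    apply ENNReal.mul_ne_top hS2
    apply ENNReal.add_ne_top.2 ⟨_, by simp⟩
    exact ENNReal.mul_ne_top hU2 (ENNReal.mul_ne_top (by simp) hG2)
  refine ⟨(S * (U * (ENNReal.ofReal D * G) + 1)).toReal, ?_, fun t s ht hts => ?_⟩
  · rw [← ENNReal.toReal_one]
    apply ENNReal.toReal_mono hfin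
    exact one_le_mul hS1 le_add_self
  have hs := ht.trans_le hts
  have hbs := hb.pos s hs
  have hts0 : 0 < t / s := by positivity
  set N := LqNorm r (Ioi s) (svWgt r b)
  have h1 : LqNorm r (Ioo t s) (svWgt r b) ≤
      U * (ENNReal.ofReal (D * (t / s) ^ (-ε)) * ENNReal.ofReal (b s)) := by
    have h2 := hU s (ENNReal.ofReal (D * (t / s) ^ (-ε)) * ENNReal.ofReal (b s))
      ((Ioo t s).indicator (svWgt r b)) hs (fun u hu => by
        by_cases hut : u ∈ Ioo t s
        · rw [indicator_of_mem hut, svWgt, ← ENNReal.ofReal_mul (by positivity), ← ENNReal.ofReal_mul (by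
            have := hu.1
            positivity)]
          apply ENNReal.ofReal_le_ofReal
          have hu0 := hu.1
          rw [mul_assoc]
          gcongr
          have h3 := (hD u s hu0 hu.2.le).2
          refine h3.trans ?_
          have h4 : (u / s) ^ (-(ε/2)) = (u / s) ^ (ε / 2) * (u / s) ^ (-ε) := by
            rw [← Real.rpow_add (by positivity)]; congr 1; ring
          have h5 : (u / s) ^ (-ε) ≤ (t / s) ^ (-ε) := by
            apply Real.rpow_le_rpow_of_nonpos hts0 _ (by linarith)
            gcongr; exact hut.1.le
          rw [h4]
          calc D * ((u / s) ^ (ε / 2) * (u / s) ^ (-ε)) * b s ≤ D * ((u / s) ^ (ε / 2) * (t / s) ^ (-ε)) * b s := by gcongr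
            _ = _ := by ring
        · rw [indicator_of_notMem hut]; exact zero_le)
    refine le_trans ?_ h2
    refine le_trans ?_ (LqNorm_mono_set (Ioo_subset_Ioo_left ht.le) _)
    apply LqNorm_mono measurableSet_Ioo
    intro u hu
    rw [indicator_of_mem hu]
  have hone : 1 ≤ ENNReal.ofReal ((t / s) ^ (-ε)) := by
    rw [ENNReal.one_le_ofReal]
    apply Real.one_le_rpow_of_pos_of_le_one_of_nonpos hts0 ((div_le_one hs).2 hts) (by linarith)
  calc _ ≤ S * (LqNorm r (Ioo t s) (svWgt r b) + N) := hS t s _ hts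
    _ ≤ S * (U * (ENNReal.ofReal (D * (t / s) ^ (-ε)) * (G * N)) + ENNReal.ofReal ((t / s) ^ (-ε)) * N) := by
      gcongr
      · refine h1.trans ?_
        gcongr
        exact hG s hs
      · exact le_mul_of_one_le_left zero_le hone
    _ = _ := by
      rw [ENNReal.ofReal_mul ENNReal.toReal_nonneg, ENNReal.ofReal_toReal hfin, ENNReal.ofReal_mul (by linarith)]
      ring

lemma tail_ne_top {r : ℝ≥0∞} (hr : 0 < r) {b : ℝ → ℝ} (hb : SVB b)
    (hfin : LqNorm r (Ioi 1) (svWgt r b) ≠ ∞) : ∀ t, 0 < t → LqNorm r (Ioi t) (svWgt r b) ≠ ∞ := by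
  intro t ht
  obtain ⟨C, hC1, hC⟩ := tail_le hr hb 1 one_pos
  rcases le_total t 1 with h | h
  · exact ne_top_of_le_ne_top (ENNReal.mul_ne_top (by simp) hfin) (hC t 1 ht h)
  · exact ne_top_of_le_ne_top hfin (LqNorm_mono_set (Ioi_subset_Ioi h) _)

lemma tail_pos {r : ℝ≥0∞} (hr : 0 < r) {b : ℝ → ℝ} (hb : SVB b)
    (hfin : LqNorm r (Ioi 1) (svWgt r b) ≠ ∞) : ∀ t, 0 < t →
      0 < (LqNorm r (Ioi t) (svWgt r b)).toReal := by
  intro t ht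
  obtain ⟨G, hG1, hG2, hG⟩ := tail_ge hr hb
  refine ENNReal.toReal_pos ?_ (tail_ne_top hr hb hfin t ht)
  intro h
  have := hG t ht
  rw [h, mul_zero] at this
  have h2 := hb.pos t ht
  simp at this
  linarith

lemma tail_SVB {r : ℝ≥0∞} (hr : 0 < r) {b : ℝ → ℝ} (hb : SVB b)
    (hfin : LqNorm r (Ioi 1) (svWgt r b) ≠ ∞) :
    SVB (fun t => (LqNorm r (Ioi t) (svWgt r b)).toReal) := by
  intro ε hε
  obtain ⟨C, hC1, hC⟩ := tail_le hr hb ε hε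
  refine ⟨tail_pos hr hb hfin, Real.log C, fun t s ht hts => ?_⟩
  have hs := ht.trans_le hts
  have hl : 0 ≤ Real.log s - Real.log t := sub_nonneg.2 (Real.log_le_log ht hts)
  have hlC := Real.log_nonneg hC1
  have hC0 : 0 < C := by linarith
  have ft := tail_ne_top hr hb hfin t ht
  have fs := tail_ne_top hr hb hfin s hs
  have pt := tail_pos hr hb hfin t ht
  have ps := tail_pos hr hb hfin s hs
  have hd : 0 < t / s := by positivity
  constructor
  · have h1 := ENNReal.toReal_mono (ENNReal.mul_ne_top (by simp) fs) (hC t s ht hts)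
    rw [ENNReal.toReal_mul, ENNReal.toReal_ofReal (by positivity)] at h1
    have h2 := Real.log_le_log pt h1
    rw [Real.log_mul (by positivity) ps.ne', Real.log_mul hC0.ne' (by positivity), Real.log_rpow hd,
      Real.log_div ht.ne' hs.ne'] at h2
    linarith
  · have h1 := ENNReal.toReal_mono ft (LqNorm_mono_set (q := r) (Ioi_subset_Ioi hts) (svWgt r b))
    have h2 := Real.log_le_log ps h1
    nlinarith

set_option linter.unusedSectionVars false

lemma LqNorm_le_of_le' {q : ℝ≥0∞} (h0 : 0 < q) {s : Set ℝ} (hs : MeasurableSet s)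
    {C A : ℝ≥0∞} (hC : C ≠ 0) {g w : ℝ → ℝ≥0∞} (hw : LqNorm q s w ≤ C)
    (H : ∀ u ∈ s, g u ≤ w u * A) : LqNorm q s g ≤ C * A := by
  by_cases hA : A = ∞
  · subst hA
    rw [ENNReal.mul_top hC]
    exact le_top
  · calc _ ≤ LqNorm q s (fun u => A * w u) := LqNorm_mono hs (fun u hu => by rw [mul_comm]; exact H u hu)
      _ = A * LqNorm q s w := LqNorm_const_mul h0 s hA w
      _ ≤ C * A := by rw [mul_comm]; gcongr

lemma Kf_mono (N₀ N₁ : E → ℝ≥0∞) {t s : ℝ} (h : t ≤ s) (f : E) :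
    Kf N₀ N₁ t f ≤ Kf N₀ N₁ s f := by
  unfold Kf
  gcongr

lemma Kf_scale (N₀ N₁ : E → ℝ≥0∞) {t s : ℝ} (ht : 0 < t) (h : t ≤ s) (f : E) :
    Kf N₀ N₁ s f ≤ ENNReal.ofReal (s / t) * Kf N₀ N₁ t f := by
  have hs := ht.trans_le h
  have hst : 0 < s / t := by positivity
  unfold Kf
  rw [ENNReal.mul_iInf_of_ne (by simpa using hst) (by simp)]
  apply iInf_mono
  intro g
  rw [mul_add, ← mul_assoc, ← ENNReal.ofReal_mul hst.le, div_mul_cancel₀ _ ht.ne']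
  gcongr
  apply le_mul_of_one_le_left zero_le
  rw [ENNReal.one_le_ofReal]
  exact (one_le_div ht).2 h

lemma Kf_le (N₀ N₁ : E → ℝ≥0∞) (t : ℝ) (f g : E) :
    Kf N₀ N₁ t f ≤ N₀ g + ENNReal.ofReal t * N₁ (f - g) := iInf_le _ g

lemma QuasiBanach.neg' (A : QuasiBanach E) (x : E) : A.N (-x) = A.N x := by
  have := A.smul (-1) x
  simpa using this

lemma Kf_le0 (A₀ A₁ : QuasiBanach E) (s : ℝ) (g : E) : Kf A₀.N A₁.N s g ≤ A₀.N g := by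
  have := Kf_le A₀.N A₁.N s g g
  simpa [A₁.zero] using this

lemma Kf_le1 (A₀ A₁ : QuasiBanach E) (s : ℝ) (g : E) :
    Kf A₀.N A₁.N s g ≤ ENNReal.ofReal s * A₁.N g := by
  have := Kf_le A₀.N A₁.N s g 0
  simpa [A₀.zero] using this

lemma Kf_quasi (A₀ A₁ : QuasiBanach E) : ∃ C : ℝ≥0∞, 1 ≤ C ∧ C ≠ ∞ ∧ ∀ (s : ℝ) (x y : E),
    Kf A₀.N A₁.N s (x + y) ≤ C * (Kf A₀.N A₁.N s x + Kf A₀.N A₁.N s y) := by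
  obtain ⟨C0, h01, h02, h0⟩ := A₀.quasi
  obtain ⟨C1, h11, h12, h1⟩ := A₁.quasi
  refine ⟨max C0 C1, le_max_of_le_left h01, by simp [h02, h12], fun s x y => ?_⟩
  set C := max C0 C1
  have hC0 : C ≠ 0 := (lt_of_lt_of_le one_pos (le_max_of_le_left h01)).ne'
  have hC : C ≠ ∞ := by simp [C, h02, h12]
  have key : ∀ g g', Kf A₀.N A₁.N s (x + y) ≤
      C * ((A₀.N g + ENNReal.ofReal s * A₁.N (x - g)) + (A₀.N g' + ENNReal.ofReal s * A₁.N (y - g'))) := by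
    intro g g'
    refine (Kf_le _ _ s (x + y) (g + g')).trans ?_
    have e : x + y - (g + g') = (x - g) + (y - g') := by abel
    rw [e]
    calc _ ≤ C * (A₀.N g + A₀.N g') + ENNReal.ofReal s * (C * (A₁.N (x - g) + A₁.N (y - g'))) := by
          gcongr
          · exact (h0 g g').trans (by gcongr; exact le_max_left _ _)
          · exact (h1 _ _).trans (by gcongr; exact le_max_right _ _)
      _ = _ := by ring
  have : Kf A₀.N A₁.N s x + Kf A₀.N A₁.N s y = ⨅ g, ⨅ g',
      ((A₀.N g + ENNReal.ofReal s * A₁.N (x - g)) + (A₀.N g' + ENNReal.ofReal s * A₁.N (y - g'))) := by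
    conv_lhs => unfold Kf
    rw [ENNReal.iInf_add]
    congr 1
    ext g
    rw [ENNReal.add_iInf]
  rw [this, ENNReal.mul_iInf_of_ne hC0 hC]
  refine le_iInf fun g => ?_
  rw [ENNReal.mul_iInf_of_ne hC0 hC]
  exact le_iInf fun g' => key g g'

lemma Kf_left (A₀ A₁ : QuasiBanach E) : ∃ C : ℝ≥0∞, 1 ≤ C ∧ C ≠ ∞ ∧ ∀ (s : ℝ) (f g : E),
    Kf A₀.N A₁.N s g ≤ C * (Kf A₀.N A₁.N s f + ENNReal.ofReal s * A₁.N (f - g)) ∧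
    Kf A₀.N A₁.N s (f - g) ≤ C * (Kf A₀.N A₁.N s f + A₀.N g) ∧
    Kf A₀.N A₁.N s f ≤ C * (Kf A₀.N A₁.N s g + Kf A₀.N A₁.N s (f - g)) := by
  obtain ⟨C, h1, h2, h⟩ := Kf_quasi A₀ A₁
  refine ⟨C, h1, h2, fun s f g => ⟨?_, ?_, ?_⟩⟩
  · have := h s f (-(f - g))
    rw [show f + -(f - g) = g by abel] at this
    refine this.trans ?_
    gcongr
    rw [← A₁.neg']
    exact Kf_le1 _ _ _ _
  · have := h s f (-g)
    rw [← sub_eq_add_neg] at this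
    refine this.trans ?_
    gcongr
    rw [← A₀.neg']
    exact Kf_le0 _ _ _ _
  · have := h s g (f - g)
    rwa [show g + (f - g) = f by abel] at this

lemma Kf_doubling {w : ℝ → ℝ} {α β : ℝ} (hw : PB w α β) (M : ℝ) (hM : 1 ≤ M) :
    ∃ D : ℝ≥0∞, 1 ≤ D ∧ D ≠ ∞ ∧ ∀ (N₀ N₁ : E → ℝ≥0∞) (f : E) (t s : ℝ), 0 < t → 0 < s →
      t ≤ M * s → s ≤ M * t →
      ENNReal.ofReal (w s) * Kf N₀ N₁ s f ≤ D * (ENNReal.ofReal (w t) * Kf N₀ N₁ t f) := by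
  obtain ⟨C, hC1, hC⟩ := hw.doubling M hM
  have hM0 : 0 < M := by linarith
  refine ⟨ENNReal.ofReal C * ENNReal.ofReal M, one_le_mul (by simpa using hC1) (by simpa using hM),
    ENNReal.mul_ne_top (by simp) (by simp), fun N₀ N₁ f t s ht hs h1 h2 => ?_⟩
  have hK : Kf N₀ N₁ s f ≤ ENNReal.ofReal M * Kf N₀ N₁ t f := by
    rcases le_total t s with h | h
    · refine (Kf_scale N₀ N₁ ht h f).trans ?_
      gcongr
      rwa [div_le_iff₀ ht]
    · refine (Kf_mono N₀ N₁ h f).trans ?_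
      exact le_mul_of_one_le_left zero_le (by simpa using hM)
  calc _ ≤ ENNReal.ofReal (C * w t) * (ENNReal.ofReal M * Kf N₀ N₁ t f) := by
        gcongr
        exact hC t s ht hs h1 h2
    _ = _ := by rw [ENNReal.ofReal_mul (by linarith)]; ring

/-- lower pointwise estimate -/
lemma lower_pt (A₀ A₁ : QuasiBanach E) (θ₁ : ℝ)
    (r₀ r₁ q₁ : ℝ≥0∞) (hr₀ : 0 < r₀) (hr₁ : 0 < r₁) (hq₁ : 0 < q₁)
    (a₁ b₀ b₁ : ℝ → ℝ) (ha₁ : SVB a₁) (hb₀ : SVB b₀) (hb₁ : SVB b₁)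
    (d₀ d₁ ρ : ℝ → ℝ)
    (hd₀ : ∀ t, 0 < t → ENNReal.ofReal (d₀ t) = LqNorm r₀ (Ioi t) (svWgt r₀ b₀))
    (hd₁ : ∀ t, 0 < t → ENNReal.ofReal (d₁ t) = LqNorm r₁ (Ioi t) (svWgt r₁ (fun s => b₁ s / a₁ s)))
    (hd₀p : ∀ t, 0 < t → 0 < d₀ t) (hd₁p : ∀ t, 0 < t → 0 < d₁ t)
    (hρ : ∀ t, 0 < t → ρ t = t ^ θ₁ * (d₀ t / (a₁ t * d₁ t))) :
    ∃ C : ℝ≥0∞, 1 ≤ C ∧ C ≠ ∞ ∧ ∀ (f : E) (t : ℝ), 0 < t →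
      ENNReal.ofReal (d₀ t) * Kf A₀.N A₁.N t f ≤
        C * Kf (normK A₀.N A₁.N 0 r₀ b₀) (normL A₀.N A₁.N θ₁ r₁ q₁ b₁ a₁) (ρ t) f := by
  obtain ⟨C, hC1, hC2, hC⟩ := Kf_left A₀ A₁
  obtain ⟨L, hL1, hL2, hL⟩ := LqNorm_low q₁ hq₁
  obtain ⟨D, hD1, hD2, hD⟩ := Kf_doubling (E := E)
    ((PB.pow_id (-θ₁)).mul (ha₁ 1 one_pos)) 2 (by norm_num)
  refine ⟨C * (L * D), one_le_mul hC1 (one_le_mul hL1 hD1),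
    ENNReal.mul_ne_top hC2 (ENNReal.mul_ne_top hL2 hD2), fun f t ht => ?_⟩
  have hCLD : C * (L * D) ≠ ∞ := ENNReal.mul_ne_top hC2 (ENNReal.mul_ne_top hL2 hD2)
  have hCLD0 : C * (L * D) ≠ 0 := (lt_of_lt_of_le one_pos
    (one_le_mul hC1 (one_le_mul hL1 hD1))).ne'
  have hat := ha₁.pos t ht
  conv_rhs => unfold Kf
  rw [ENNReal.mul_iInf_of_ne hCLD0 hCLD]
  refine le_iInf fun g => ?_
  set h := f - g with hh
  have e1 : ENNReal.ofReal (d₀ t) * Kf A₀.N A₁.N t g ≤ normK A₀.N A₁.N 0 r₀ b₀ g := by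
    rw [hd₀ t ht, mul_comm]
    refine (LqNorm_const_mul_le hr₀ _ _ _).trans ?_
    refine le_trans ?_ (LqNorm_mono_set (Ioi_subset_Ioi ht.le) _)
    apply LqNorm_mono measurableSet_Ioi
    intro u hu
    rw [mul_comm, svWgt, neg_zero, zero_sub]
    gcongr
    exact Kf_mono _ _ (le_of_lt hu) _
  have e2 : ENNReal.ofReal (t ^ (-θ₁) * a₁ t) * Kf A₀.N A₁.N t h ≤
      L * D * LqNorm q₁ (Ioo 0 t) (fun u =>
        ENNReal.ofReal (u ^ (-θ₁ - q₁⁻¹.toReal) * a₁ u) * Kf A₀.N A₁.N u h) := by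
    have h3 := hL (t/2) (D⁻¹ * (ENNReal.ofReal (t ^ (-θ₁) * a₁ t) * Kf A₀.N A₁.N t h))
      (fun u => ENNReal.ofReal (u ^ (-θ₁ - q₁⁻¹.toReal) * a₁ u) * Kf A₀.N A₁.N u h)
      (by positivity) (fun u hu => by
        have hu0 : 0 < u := by linarith [hu.1]
        have hau := ha₁.pos u hu0
        rw [show u ^ (-θ₁ - q₁⁻¹.toReal) * a₁ u = u ^ (-q₁⁻¹.toReal) * (u ^ (-θ₁) * a₁ u) by
          rw [← mul_assoc, ← Real.rpow_add hu0]; congr 2; ring]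
        rw [ENNReal.ofReal_mul (p := u ^ (-q₁⁻¹.toReal)) (by positivity),
          mul_assoc (ENNReal.ofReal (u ^ (-q₁⁻¹.toReal)))]
        refine mul_le_mul_right ?_ _
        rw [ENNReal.inv_mul_le_iff (by positivity) hD2]
        exact hD A₀.N A₁.N h u t hu0 ht (by linarith [hu.2]) (by linarith [hu.1]))
    rw [ENNReal.inv_mul_le_iff (by positivity) hD2, show 2 * (t / 2) = t by ring] at h3
    refine h3.trans ?_
    rw [← mul_assoc, mul_comm D L]
    gcongr
    exact LqNorm_mono_set (Ioo_subset_Ioo_left (by positivity)) _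
  have e3 : ENNReal.ofReal (d₀ t) * Kf A₀.N A₁.N t h ≤
      L * D * (ENNReal.ofReal (ρ t) * normL A₀.N A₁.N θ₁ r₁ q₁ b₁ a₁ h) := by
    have hdt := hd₀p t ht
    have hdt1 := hd₁p t ht
    have hρt : 0 < ρ t := by rw [hρ t ht]; positivity
    have e4 : d₀ t = ρ t * d₁ t * (t ^ (-θ₁) * a₁ t) := by
      rw [hρ t ht, Real.rpow_neg ht.le]; field_simp
    rw [e4, ENNReal.ofReal_mul (by positivity), mul_assoc]
    refine (mul_le_mul_right e2 _).trans ?_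
    rw [ENNReal.ofReal_mul hρt.le]
    set I := fun τ => LqNorm q₁ (Ioo 0 τ) (fun u =>
        ENNReal.ofReal (u ^ (-θ₁ - q₁⁻¹.toReal) * a₁ u) * Kf A₀.N A₁.N u h) with hI
    have e5 : ENNReal.ofReal (d₁ t) * I t ≤ normL A₀.N A₁.N θ₁ r₁ q₁ b₁ a₁ h := by
      rw [hd₁ t ht, mul_comm]
      refine (LqNorm_const_mul_le hr₁ _ _ _).trans ?_
      refine le_trans ?_ (LqNorm_mono_set (Ioi_subset_Ioi ht.le) _)
      apply LqNorm_mono measurableSet_Ioi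
      intro u hu
      rw [mul_comm, svWgt]
      gcongr
      exact LqNorm_mono_set (Ioo_subset_Ioo_right (le_of_lt hu)) _
    calc _ = L * D * (ENNReal.ofReal (ρ t) * (ENNReal.ofReal (d₁ t) * I t)) := by
          simp only [hI]; ring
      _ ≤ _ := by gcongr
  have hLD : 1 ≤ L * D := one_le_mul hL1 hD1
  calc _ ≤ ENNReal.ofReal (d₀ t) * (C * (Kf A₀.N A₁.N t g + Kf A₀.N A₁.N t h)) := by
        gcongr; exact (hC t f g).2.2
    _ = C * (ENNReal.ofReal (d₀ t) * Kf A₀.N A₁.N t g + ENNReal.ofReal (d₀ t) * Kf A₀.N A₁.N t h) := by ring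
    _ ≤ C * (L * D * normK A₀.N A₁.N 0 r₀ b₀ g +
        L * D * (ENNReal.ofReal (ρ t) * normL A₀.N A₁.N θ₁ r₁ q₁ b₁ a₁ h)) := by
        exact mul_le_mul_right (add_le_add (e1.trans (le_mul_of_one_le_left zero_le hLD)) e3) _
    _ = _ := by ring


lemma upper0 (A₀ A₁ : QuasiBanach E) (r₀ : ℝ≥0∞) (hr₀ : 0 < r₀) (b₀ d₀ : ℝ → ℝ)
    (hb₀ : SVB b₀)
    (hd₀ : ∀ t, 0 < t → ENNReal.ofReal (d₀ t) = LqNorm r₀ (Ioi t) (svWgt r₀ b₀))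
    (hd₀S : SVB d₀) (γ : ℝ) (hγ : 0 < γ) (hγ2 : γ ≤ 1 / 2) :
    ∃ C : ℝ≥0∞, 1 ≤ C ∧ C ≠ ∞ ∧ ∀ (f g : E) (t : ℝ) (B V : ℝ≥0∞), 0 < t →
      A₀.N g ≤ B → ENNReal.ofReal t * A₁.N (f - g) ≤ B → ENNReal.ofReal (d₀ t) * B ≤ V →
      (∀ u, 0 < u → u ≤ t → ENNReal.ofReal (d₀ u) * Kf A₀.N A₁.N u f ≤
        ENNReal.ofReal ((u / t) ^ γ) * V) →
      normK A₀.N A₁.N 0 r₀ b₀ g ≤ C * V := by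
  obtain ⟨C, hC1, hC2, hC⟩ := Kf_left A₀ A₁
  obtain ⟨S, hS1, hS2, hS⟩ := LqNorm_split r₀
  obtain ⟨U, hU1, hU2, hU⟩ := LqNorm_up0 r₀ hr₀ γ hγ
  obtain ⟨G, hG1, hG2, hG⟩ := tail_ge hr₀ hb₀
  obtain ⟨D, hD1, hD⟩ := (hd₀S (1/2) (by norm_num)).bounds
  set D' := ENNReal.ofReal D with hD'
  have hfin : S * (U * (G * C * (1 + D')) + 1) ≠ ∞ := by
    apply ENNReal.mul_ne_top hS2
    apply ENNReal.add_ne_top.2 ⟨_, by simp⟩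
    apply ENNReal.mul_ne_top hU2
    apply ENNReal.mul_ne_top (ENNReal.mul_ne_top hG2 hC2)
    exact ENNReal.add_ne_top.2 ⟨by simp, by simp [hD']⟩
  refine ⟨_, one_le_mul hS1 le_add_self, hfin, fun f g t B V ht h0 h1 hB hK => ?_⟩
  have hdt := hd₀S.pos t ht
  have p1 : LqNorm r₀ (Ioo 0 t) (fun u =>
      ENNReal.ofReal (u ^ (-(0:ℝ) - r₀⁻¹.toReal) * b₀ u) * Kf A₀.N A₁.N u g) ≤
      U * (G * C * (1 + D') * V) := by
    apply hU t _ _ ht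
    intro u hu
    have hu0 : 0 < u := hu.1
    have hut : u ≤ t := hu.2.le
    have hbu := hb₀.pos u hu0
    have hdu := hd₀S.pos u hu0
    have hq : 0 < u / t := by positivity
    have real1 : d₀ u * (u / t) ≤ D * (u / t) ^ γ * d₀ t := by
      have := (hD u t hu0 hut).2
      calc d₀ u * (u / t) ≤ (D * (u / t) ^ (-(1/2:ℝ)) * d₀ t) * (u / t) := by gcongr
        _ = D * ((u / t) ^ (-(1/2:ℝ)) * (u / t)) * d₀ t := by ring
        _ = D * (u / t) ^ (1/2:ℝ) * d₀ t := by
            congr 2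
            nth_rw 2 [← Real.rpow_one (u / t)]
            rw [← Real.rpow_add hq]; norm_num
        _ ≤ D * (u / t) ^ γ * d₀ t := by
            gcongr ?_ * ?_ * ?_
            exact Real.rpow_le_rpow_of_exponent_ge hq ((div_le_one ht).2 hut) hγ2
    have e1 : ENNReal.ofReal (d₀ u) * (ENNReal.ofReal u * A₁.N (f - g)) ≤
        D' * ENNReal.ofReal ((u / t) ^ γ) * V := by
      calc _ = ENNReal.ofReal (d₀ u * (u / t)) * (ENNReal.ofReal t * A₁.N (f - g)) := by
            rw [← mul_assoc, ← mul_assoc, ← ENNReal.ofReal_mul hdu.le, ← ENNReal.ofReal_mul (by positivity)]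
            congr 2; field_simp
        _ ≤ ENNReal.ofReal (D * (u / t) ^ γ * d₀ t) * B := by gcongr
        _ = D' * ENNReal.ofReal ((u / t) ^ γ) * (ENNReal.ofReal (d₀ t) * B) := by
            rw [ENNReal.ofReal_mul (by positivity), ENNReal.ofReal_mul (by positivity)]; ring
        _ ≤ _ := by gcongr
    have e2 : ENNReal.ofReal (b₀ u) * Kf A₀.N A₁.N u g ≤
        ENNReal.ofReal ((u / t) ^ γ) * (G * C * (1 + D') * V) := by
      calc _ ≤ (G * ENNReal.ofReal (d₀ u)) * (C * (Kf A₀.N A₁.N u f + ENNReal.ofReal u * A₁.N (f - g))) := by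
            gcongr
            · rw [hd₀ u hu0]; exact hG u hu0
            · exact (hC u f g).1
        _ = G * C * (ENNReal.ofReal (d₀ u) * Kf A₀.N A₁.N u f + ENNReal.ofReal (d₀ u) * (ENNReal.ofReal u * A₁.N (f - g))) := by ring
        _ ≤ G * C * (ENNReal.ofReal ((u / t) ^ γ) * V + D' * ENNReal.ofReal ((u / t) ^ γ) * V) :=
            mul_le_mul_right (add_le_add (hK u hu0 hut) e1) _
        _ = _ := by ring
    rw [neg_zero, zero_sub, ENNReal.ofReal_mul (by positivity), ENNReal.ofReal_mul (by positivity), mul_assoc, mul_assoc]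
    exact mul_le_mul_right e2 _
  have p2 : LqNorm r₀ (Ioi t) (fun u =>
      ENNReal.ofReal (u ^ (-(0:ℝ) - r₀⁻¹.toReal) * b₀ u) * Kf A₀.N A₁.N u g) ≤ V := by
    refine le_trans ?_ hB
    refine LqNorm_le_of_le' hr₀ measurableSet_Ioi (by simpa using hdt) (hd₀ t ht).ge ?_
    intro u hu
    rw [svWgt, neg_zero, zero_sub]
    gcongr
    exact (Kf_le0 A₀ A₁ u g).trans h0
  calc _ ≤ S * (U * (G * C * (1 + D') * V) + V) := (hS 0 t _ ht.le).trans (by gcongr)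
    _ = _ := by ring

lemma upper1 (A₀ A₁ : QuasiBanach E) (θ₁ : ℝ)
    (r₁ q₁ : ℝ≥0∞) (hr₁ : 0 < r₁) (hq₁ : 0 < q₁)
    (a₁ b₁ : ℝ → ℝ) (ha₁ : SVB a₁) (hb₁ : SVB b₁)
    (d₀ d₁ ρ : ℝ → ℝ)
    (hd₁ : ∀ t, 0 < t → ENNReal.ofReal (d₁ t) = LqNorm r₁ (Ioi t) (svWgt r₁ (fun s => b₁ s / a₁ s)))
    (hd₀p : ∀ t, 0 < t → 0 < d₀ t) (hd₁S : SVB d₁)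
    (hρ : ∀ t, 0 < t → ρ t = t ^ θ₁ * (d₀ t / (a₁ t * d₁ t)))
    (γ : ℝ) (hγ : 0 < γ) (hγ1 : γ ≤ θ₁ / 2) (hγ2 : γ ≤ (1 - θ₁) / 2) :
    ∃ C : ℝ≥0∞, 1 ≤ C ∧ C ≠ ∞ ∧ ∀ (f g : E) (t : ℝ) (B V : ℝ≥0∞), 0 < t →
      A₀.N g ≤ B → ENNReal.ofReal t * A₁.N (f - g) ≤ B → ENNReal.ofReal (d₀ t) * B ≤ V →
      (∀ u, t ≤ u → ENNReal.ofReal (u ^ (-θ₁) * a₁ u * d₁ u) * Kf A₀.N A₁.N u f ≤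
        ENNReal.ofReal ((t / u) ^ γ * (ρ t)⁻¹) * V) →
      ENNReal.ofReal (ρ t) * normL A₀.N A₁.N θ₁ r₁ q₁ b₁ a₁ (f - g) ≤ C * V := by
  obtain ⟨C, hC1, hC2, hC⟩ := Kf_left A₀ A₁
  obtain ⟨S, hS1, hS2, hS⟩ := LqNorm_split r₁
  obtain ⟨S', hS'1, hS'2, hS'⟩ := LqNorm_split q₁
  obtain ⟨U, hU1, hU2, hU⟩ := LqNorm_up0 q₁ hq₁ (γ / 2) (by positivity)
  obtain ⟨U', hU'1, hU'2, hU'⟩ := LqNorm_up0 r₁ hr₁ (γ / 4) (by positivity)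
  obtain ⟨W, hW1, hW2, hW⟩ := LqNorm_upinf q₁ hq₁ (γ / 2) (by positivity)
  have hba : SVB (fun s => b₁ s / a₁ s) := hb₁.div ha₁
  obtain ⟨G, hG1, hG2, hG⟩ := tail_ge hr₁ hba
  obtain ⟨D, hD1, hD⟩ := ((PB.pow_id (-θ₁)).mul (ha₁ γ hγ)).bounds
  obtain ⟨F, hF1, hF⟩ := (hd₁S (γ / 2) (by positivity)).bounds
  obtain ⟨H, hH1, hH⟩ := (hba (γ / 4) (by positivity)).bounds
  set D' := ENNReal.ofReal D with hD'
  set F' := ENNReal.ofReal F with hF'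
  set H' := ENNReal.ofReal H with hH'
  have hD'2 : D' ≠ ∞ := by simp [hD']
  have hF'2 : F' ≠ ∞ := by simp [hF']
  have hH'2 : H' ≠ ∞ := by simp [hH']
  set c1 := U * D' with hc1
  set c2 := S' * (U * D' + W * (C * (F' + D'))) with hc2
  have hc1f : c1 ≠ ∞ := ENNReal.mul_ne_top hU2 hD'2
  have hc2f : c2 ≠ ∞ := ENNReal.mul_ne_top hS'2 (ENNReal.add_ne_top.2 ⟨hc1f,
    ENNReal.mul_ne_top hW2 (ENNReal.mul_ne_top hC2 (ENNReal.add_ne_top.2 ⟨hF'2, hD'2⟩))⟩)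
  have hfin : S * (U' * (H' * c1 * G) + c2) ≠ ∞ :=
    ENNReal.mul_ne_top hS2 (ENNReal.add_ne_top.2 ⟨ENNReal.mul_ne_top hU'2
      (ENNReal.mul_ne_top (ENNReal.mul_ne_top hH'2 hc1f) hG2), hc2f⟩)
  refine ⟨1 + S * (U' * (H' * c1 * G) + c2), le_self_add, ENNReal.add_ne_top.2 ⟨by simp, hfin⟩,
    fun f g t B V ht h0 h1 hB hK => ?_⟩
  refine le_trans ?_ (mul_le_mul_left (le_add_self (a := S * (U' * (H' * c1 * G) + c2)) (b := 1)) V)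
  have hd0 := hd₀p t ht
  have hd1 := hd₁S.pos t ht
  have hat := ha₁.pos t ht
  have hρt : 0 < ρ t := by rw [hρ t ht]; positivity
  set h := f - g with hh
  set Z := ENNReal.ofReal ((ρ t * d₁ t)⁻¹) * V with hZ
  have hBZ : ENNReal.ofReal (t ^ (-θ₁) * a₁ t) * B ≤ Z := by
    have e : t ^ (-θ₁) * a₁ t = (ρ t * d₁ t)⁻¹ * d₀ t := by
      rw [hρ t ht, Real.rpow_neg ht.le]; field_simp
    rw [e, ENNReal.ofReal_mul (by positivity), mul_assoc, hZ]
    gcongr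
  have q0 : ∀ u, 0 < u → u ≤ t → ENNReal.ofReal (u ^ (-θ₁) * a₁ u) * Kf A₀.N A₁.N u h ≤
      ENNReal.ofReal ((u / t) ^ (γ / 2)) * (D' * Z) := by
    intro u hu hut
    have hau := ha₁.pos u hu
    have hq : 0 < u / t := by positivity
    have hq1 : u / t ≤ 1 := (div_le_one ht).2 hut
    have real1 : u ^ (-θ₁) * a₁ u * (u / t) ≤ D * (u / t) ^ (γ / 2) * (t ^ (-θ₁) * a₁ t) := by
      have := (hD u t hu hut).2
      calc u ^ (-θ₁) * a₁ u * (u / t) ≤ (D * (u / t) ^ (-θ₁ + -γ) * (t ^ (-θ₁) * a₁ t)) * (u / t) := by gcongr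
        _ = D * ((u / t) ^ (-θ₁ + -γ) * (u / t)) * (t ^ (-θ₁) * a₁ t) := by ring
        _ = D * (u / t) ^ (-θ₁ + -γ + 1) * (t ^ (-θ₁) * a₁ t) := by
            congr 2
            nth_rw 2 [← Real.rpow_one (u / t)]
            rw [← Real.rpow_add hq]
        _ ≤ _ := by
            gcongr ?_ * ?_ * ?_
            exact Real.rpow_le_rpow_of_exponent_ge hq hq1 (by linarith)
    calc _ ≤ ENNReal.ofReal (u ^ (-θ₁) * a₁ u) * (ENNReal.ofReal u * A₁.N h) := by
          gcongr; exact Kf_le1 _ _ _ _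
      _ = ENNReal.ofReal (u ^ (-θ₁) * a₁ u * (u / t)) * (ENNReal.ofReal t * A₁.N h) := by
          rw [← mul_assoc, ← mul_assoc, ← ENNReal.ofReal_mul (by positivity), ← ENNReal.ofReal_mul (by positivity)]
          congr 2; field_simp
      _ ≤ ENNReal.ofReal (D * (u / t) ^ (γ / 2) * (t ^ (-θ₁) * a₁ t)) * B := by gcongr
      _ = ENNReal.ofReal ((u / t) ^ (γ / 2)) * (D' * (ENNReal.ofReal (t ^ (-θ₁) * a₁ t) * B)) := by
          rw [ENNReal.ofReal_mul (by positivity), ENNReal.ofReal_mul (by positivity)]; ring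
      _ ≤ _ := by gcongr
  have q1 : ∀ u, t ≤ u → ENNReal.ofReal (u ^ (-θ₁) * a₁ u) * Kf A₀.N A₁.N u h ≤
      ENNReal.ofReal ((t / u) ^ (γ / 2)) * (C * (F' + D') * Z) := by
    intro u htu
    have hu := ht.trans_le htu
    have hau := ha₁.pos u hu
    have hdu := hd₁S.pos u hu
    have hq : 0 < t / u := by positivity
    have hq1 : t / u ≤ 1 := (div_le_one hu).2 htu
    have real1 : u ^ (-θ₁) * a₁ u ≤ D * (t / u) ^ (γ / 2) * (t ^ (-θ₁) * a₁ t) := by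
      refine (hD t u ht htu).1.trans ?_
      gcongr ?_ * ?_ * ?_
      exact Real.rpow_le_rpow_of_exponent_ge hq hq1 (by linarith)
    have real2 : (d₁ u)⁻¹ * ((t / u) ^ γ * (ρ t)⁻¹) ≤ F * (t / u) ^ (γ / 2) * (ρ t * d₁ t)⁻¹ := by
      have h3 := (hF t u ht htu).2
      have h4 : (d₁ u)⁻¹ ≤ F * (t / u) ^ (-(γ / 2)) * (d₁ t)⁻¹ := by
        rw [← div_eq_mul_inv, le_div_iff₀ hd1, inv_mul_le_iff₀ hdu]
        linarith
      calc _ ≤ F * (t / u) ^ (-(γ / 2)) * (d₁ t)⁻¹ * ((t / u) ^ γ * (ρ t)⁻¹) := by gcongr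
        _ = F * ((t / u) ^ (-(γ / 2)) * (t / u) ^ γ) * (ρ t * d₁ t)⁻¹ := by rw [mul_inv]; ring
        _ = _ := by rw [← Real.rpow_add hq]; congr 3; ring
    have e1 : ENNReal.ofReal (u ^ (-θ₁) * a₁ u) * Kf A₀.N A₁.N u f ≤
        F' * ENNReal.ofReal ((t / u) ^ (γ / 2)) * Z := by
      calc _ = ENNReal.ofReal ((d₁ u)⁻¹) * (ENNReal.ofReal (u ^ (-θ₁) * a₁ u * d₁ u) * Kf A₀.N A₁.N u f) := by
            rw [← mul_assoc, ← ENNReal.ofReal_mul (by positivity)]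
            congr 2; field_simp
        _ ≤ ENNReal.ofReal ((d₁ u)⁻¹) * (ENNReal.ofReal ((t / u) ^ γ * (ρ t)⁻¹) * V) :=
            mul_le_mul_right (hK u htu) _
        _ = ENNReal.ofReal ((d₁ u)⁻¹ * ((t / u) ^ γ * (ρ t)⁻¹)) * V := by
            rw [← mul_assoc, ← ENNReal.ofReal_mul (by positivity)]
        _ ≤ ENNReal.ofReal (F * (t / u) ^ (γ / 2) * (ρ t * d₁ t)⁻¹) * V := by gcongr
        _ = _ := by
            rw [ENNReal.ofReal_mul (by positivity), ENNReal.ofReal_mul (by positivity), mul_assoc]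
    have e2 : ENNReal.ofReal (u ^ (-θ₁) * a₁ u) * B ≤
        D' * ENNReal.ofReal ((t / u) ^ (γ / 2)) * Z := by
      calc _ ≤ ENNReal.ofReal (D * (t / u) ^ (γ / 2) * (t ^ (-θ₁) * a₁ t)) * B := by gcongr
        _ = D' * ENNReal.ofReal ((t / u) ^ (γ / 2)) * (ENNReal.ofReal (t ^ (-θ₁) * a₁ t) * B) := by
          rw [ENNReal.ofReal_mul (by positivity), ENNReal.ofReal_mul (by positivity)]; ring
        _ ≤ _ := by gcongr
    calc _ ≤ ENNReal.ofReal (u ^ (-θ₁) * a₁ u) * (C * (Kf A₀.N A₁.N u f + B)) := by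
          gcongr
          refine ((hC u f g).2.1).trans ?_
          gcongr
      _ = C * (ENNReal.ofReal (u ^ (-θ₁) * a₁ u) * Kf A₀.N A₁.N u f + ENNReal.ofReal (u ^ (-θ₁) * a₁ u) * B) := by ring
      _ ≤ C * (F' * ENNReal.ofReal ((t / u) ^ (γ / 2)) * Z + D' * ENNReal.ofReal ((t / u) ^ (γ / 2)) * Z) :=
          mul_le_mul_right (add_le_add e1 e2) _
      _ = _ := by ring
  have wsplit : ∀ u, 0 < u → ENNReal.ofReal (u ^ (-θ₁ - q₁⁻¹.toReal) * a₁ u) =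
      ENNReal.ofReal (u ^ (-q₁⁻¹.toReal)) * ENNReal.ofReal (u ^ (-θ₁) * a₁ u) := by
    intro u hu
    rw [← ENNReal.ofReal_mul (by positivity)]
    congr 1
    rw [← mul_assoc, ← Real.rpow_add hu]; congr 2; ring
  set I := fun τ => LqNorm q₁ (Ioo 0 τ) (fun u =>
        ENNReal.ofReal (u ^ (-θ₁ - q₁⁻¹.toReal) * a₁ u) * Kf A₀.N A₁.N u h) with hI
  have i0 : ∀ τ, 0 < τ → τ ≤ t → I τ ≤ ENNReal.ofReal ((τ / t) ^ (γ / 2)) * (c1 * Z) := by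
    intro τ hτ hτt
    have := hU τ (ENNReal.ofReal ((τ / t) ^ (γ / 2)) * (D' * Z)) (fun u =>
        ENNReal.ofReal (u ^ (-θ₁ - q₁⁻¹.toReal) * a₁ u) * Kf A₀.N A₁.N u h) hτ (fun u hu => by
      have hu0 : 0 < u := hu.1
      rw [wsplit u hu0, ENNReal.ofReal_mul (q := (u / τ) ^ (γ / 2)) (by positivity), mul_assoc, mul_assoc]
      refine mul_le_mul_right ?_ _
      refine (q0 u hu0 (hu.2.le.trans hτt)).trans ?_
      rw [← mul_assoc (ENNReal.ofReal ((u / τ) ^ (γ / 2))), ← ENNReal.ofReal_mul (by positivity),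
        ← Real.mul_rpow (by positivity) (by positivity), div_mul_div_cancel₀ hτ.ne'])
    refine this.trans (le_of_eq ?_)
    rw [hc1]; ring
  have i1 : ∀ τ, I τ ≤ c2 * Z := by
    intro τ
    refine (LqNorm_mono_set Ioo_subset_Ioi_self _).trans ?_
    refine (hS' 0 t _ ht.le).trans ?_
    have j1 := hW t (C * (F' + D') * Z) (fun u =>
        ENNReal.ofReal (u ^ (-θ₁ - q₁⁻¹.toReal) * a₁ u) * Kf A₀.N A₁.N u h) ht (fun u hu => by
      have hu0 : 0 < u := ht.trans hu
      rw [wsplit u hu0, ENNReal.ofReal_mul (q := (t / u) ^ (γ / 2)) (by positivity), mul_assoc, mul_assoc]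
      exact mul_le_mul_right (q1 u (le_of_lt hu)) _)
    have j0 := i0 t ht le_rfl
    rw [div_self ht.ne', Real.one_rpow, ENNReal.ofReal_one, one_mul] at j0
    calc _ ≤ S' * (c1 * Z + W * (C * (F' + D') * Z)) := mul_le_mul_right (add_le_add j0 j1) _
      _ = _ := by rw [hc2, hc1]; ring
  have o0 : LqNorm r₁ (Ioo 0 t) (fun τ => ENNReal.ofReal (τ ^ (-(r₁⁻¹.toReal)) * (b₁ τ / a₁ τ)) * I τ)
      ≤ U' * (H' * c1 * G) * (ENNReal.ofReal (d₁ t) * Z) := by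
    have := hU' t (H' * ENNReal.ofReal (b₁ t / a₁ t) * (c1 * Z))
      (fun τ => ENNReal.ofReal (τ ^ (-(r₁⁻¹.toReal)) * (b₁ τ / a₁ τ)) * I τ) ht (fun τ hτ => by
        have hτ0 : 0 < τ := hτ.1
        have hbt := hba.pos t ht
        have hbτ := hba.pos τ hτ0
        have hq : 0 < τ / t := by positivity
        have real1 : b₁ τ / a₁ τ * (τ / t) ^ (γ / 2) ≤ (τ / t) ^ (γ / 4) * (H * (b₁ t / a₁ t)) := by
          calc _ ≤ H * (τ / t) ^ (-(γ / 4)) * (b₁ t / a₁ t) * (τ / t) ^ (γ / 2) := by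
                have := (hH τ t hτ0 hτ.2.le).2
                gcongr
            _ = ((τ / t) ^ (-(γ / 4)) * (τ / t) ^ (γ / 2)) * (H * (b₁ t / a₁ t)) := by ring
            _ = _ := by rw [← Real.rpow_add hq]; congr 2; ring
        calc _ ≤ ENNReal.ofReal (τ ^ (-(r₁⁻¹.toReal)) * (b₁ τ / a₁ τ)) *
                (ENNReal.ofReal ((τ / t) ^ (γ / 2)) * (c1 * Z)) := mul_le_mul_right (i0 τ hτ0 hτ.2.le) _
          _ = ENNReal.ofReal (τ ^ (-(r₁⁻¹.toReal))) * ENNReal.ofReal (b₁ τ / a₁ τ * (τ / t) ^ (γ / 2)) * (c1 * Z) := by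
              rw [ENNReal.ofReal_mul (by positivity), ENNReal.ofReal_mul (p := b₁ τ / a₁ τ) (by positivity)]; ring
          _ ≤ ENNReal.ofReal (τ ^ (-(r₁⁻¹.toReal))) * ENNReal.ofReal ((τ / t) ^ (γ / 4) * (H * (b₁ t / a₁ t))) * (c1 * Z) := by
              gcongr
          _ = _ := by
              rw [ENNReal.ofReal_mul (by positivity), ENNReal.ofReal_mul (by positivity), ENNReal.ofReal_mul (by positivity)]
              ring)
    refine this.trans ?_
    calc _ ≤ U' * (H' * (G * ENNReal.ofReal (d₁ t)) * (c1 * Z)) := by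
          gcongr
          rw [hd₁ t ht]
          exact hG t ht
      _ = _ := by ring
  have o1 : LqNorm r₁ (Ioi t) (fun τ => ENNReal.ofReal (τ ^ (-(r₁⁻¹.toReal)) * (b₁ τ / a₁ τ)) * I τ)
      ≤ ENNReal.ofReal (d₁ t) * (c2 * Z) := by
    refine LqNorm_le_of_le' hr₁ measurableSet_Ioi (by simpa using hd1) (hd₁ t ht).ge ?_
    intro u hu
    rw [svWgt]
    exact mul_le_mul_right (i1 u) _
  have o2 : normL A₀.N A₁.N θ₁ r₁ q₁ b₁ a₁ h ≤ S * (U' * (H' * c1 * G) + c2) * (ENNReal.ofReal (d₁ t) * Z) := by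
    refine (hS 0 t _ ht.le).trans ?_
    calc _ ≤ S * (U' * (H' * c1 * G) * (ENNReal.ofReal (d₁ t) * Z) + ENNReal.ofReal (d₁ t) * (c2 * Z)) :=
          mul_le_mul_right (add_le_add o0 o1) _
      _ = _ := by ring
  calc _ ≤ ENNReal.ofReal (ρ t) * (S * (U' * (H' * c1 * G) + c2) * (ENNReal.ofReal (d₁ t) * Z)) :=
        mul_le_mul_right o2 _
    _ = S * (U' * (H' * c1 * G) + c2) * ((ENNReal.ofReal (ρ t) * ENNReal.ofReal (d₁ t)) * Z) := by ring
    _ = _ := by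
      rw [hZ, ← ENNReal.ofReal_mul hρt.le, ← mul_assoc (ENNReal.ofReal _) _ V, ← ENNReal.ofReal_mul (by positivity),
        mul_inv_cancel₀ (by positivity), ENNReal.ofReal_one, one_mul]

lemma upper_pt (A₀ A₁ : QuasiBanach E) (θ₁ : ℝ)
    (r₀ r₁ q₁ : ℝ≥0∞) (hr₀ : 0 < r₀) (hr₁ : 0 < r₁) (hq₁ : 0 < q₁)
    (a₁ b₀ b₁ : ℝ → ℝ) (ha₁ : SVB a₁) (hb₀ : SVB b₀) (hb₁ : SVB b₁)
    (d₀ d₁ ρ : ℝ → ℝ)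
    (hd₀ : ∀ t, 0 < t → ENNReal.ofReal (d₀ t) = LqNorm r₀ (Ioi t) (svWgt r₀ b₀))
    (hd₁ : ∀ t, 0 < t → ENNReal.ofReal (d₁ t) = LqNorm r₁ (Ioi t) (svWgt r₁ (fun s => b₁ s / a₁ s)))
    (hd₀S : SVB d₀) (hd₁S : SVB d₁)
    (hρ : ∀ t, 0 < t → ρ t = t ^ θ₁ * (d₀ t / (a₁ t * d₁ t)))
    (γ : ℝ) (hγ : 0 < γ) (hγ0 : γ ≤ 1 / 2) (hγ1 : γ ≤ θ₁ / 2) (hγ2 : γ ≤ (1 - θ₁) / 2) :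
    ∃ C : ℝ≥0∞, 1 ≤ C ∧ C ≠ ∞ ∧ ∀ (f : E) (t : ℝ) (V : ℝ≥0∞), 0 < t →
      (∀ u, 0 < u → u ≤ t → ENNReal.ofReal (d₀ u) * Kf A₀.N A₁.N u f ≤
        ENNReal.ofReal ((u / t) ^ γ) * V) →
      (∀ u, t ≤ u → ENNReal.ofReal (u ^ (-θ₁) * a₁ u * d₁ u) * Kf A₀.N A₁.N u f ≤
        ENNReal.ofReal ((t / u) ^ γ * (ρ t)⁻¹) * V) →
      Kf (normK A₀.N A₁.N 0 r₀ b₀) (normL A₀.N A₁.N θ₁ r₁ q₁ b₁ a₁) (ρ t) f ≤ C * V := by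
  obtain ⟨C0, hC01, hC02, hC0⟩ := upper0 A₀ A₁ r₀ hr₀ b₀ d₀ hb₀ hd₀ hd₀S γ hγ hγ0
  obtain ⟨C1, hC11, hC12, hC1⟩ := upper1 A₀ A₁ θ₁ r₁ q₁ hr₁ hq₁ a₁ b₁ ha₁ hb₁ d₀ d₁ ρ hd₁
    hd₀S.pos hd₁S hρ γ hγ hγ1 hγ2
  have hfin : C0 + C1 ≠ ∞ := ENNReal.add_ne_top.2 ⟨hC02, hC12⟩
  refine ⟨C0 + C1, hC01.trans le_self_add, hfin, fun f t V ht hK0 hK1 => ?_⟩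
  have hd0 := hd₀S.pos t ht
  by_cases hV : V = ∞
  · rw [hV, ENNReal.mul_top]
    · exact le_top
    · exact (lt_of_lt_of_le one_pos (hC01.trans le_self_add)).ne'
  have hKt := hK0 t ht le_rfl
  rw [div_self ht.ne', Real.one_rpow, ENNReal.ofReal_one, one_mul] at hKt
  have hKfin : Kf A₀.N A₁.N t f ≠ ∞ := by
    intro h
    rw [h, ENNReal.mul_top (by simpa using hd0)] at hKt
    exact hV (top_le_iff.1 hKt)
  apply ENNReal.le_of_forall_pos_le_add
  intro ε hε _
  set M := (C0 + C1) * ENNReal.ofReal (d₀ t) with hM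
  have hMf : M ≠ ∞ := ENNReal.mul_ne_top hfin (by simp)
  set e : ℝ≥0∞ := ε / M with he
  have he0 : 0 < e := ENNReal.div_pos (by simpa using hε.ne') hMf
  have hlt : Kf A₀.N A₁.N t f < Kf A₀.N A₁.N t f + e := ENNReal.lt_add_right hKfin he0.ne'
  set B := Kf A₀.N A₁.N t f + e with hB
  obtain ⟨g, hg⟩ := iInf_lt_iff.1 (show (⨅ g : E, A₀.N g + ENNReal.ofReal t * A₁.N (f - g)) < B from hlt)
  set V' := V + ENNReal.ofReal (d₀ t) * e with hV'
  have hVV : V ≤ V' := le_self_add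
  have b1 : A₀.N g ≤ B := le_self_add.trans hg.le
  have b2 : ENNReal.ofReal t * A₁.N (f - g) ≤ B := le_add_self.trans hg.le
  have b3 : ENNReal.ofReal (d₀ t) * B ≤ V' := by
    rw [hB, mul_add]; exact add_le_add hKt le_rfl
  have k0 := hC0 f g t B V' ht b1 b2 b3 (fun u hu hut => (hK0 u hu hut).trans (by gcongr))
  have k1 := hC1 f g t B V' ht b1 b2 b3 (fun u hut => (hK1 u hut).trans (by gcongr))
  calc _ ≤ _ := Kf_le _ _ (ρ t) f g
    _ ≤ C0 * V' + C1 * V' := add_le_add k0 k1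
    _ = (C0 + C1) * V + M * e := by rw [hV', hM]; ring
    _ ≤ _ := by gcongr; exact ENNReal.mul_div_le


/-- discrete quasi-norm -/
def lr (r : ℝ≥0∞) (x : ℤ → ℝ≥0∞) : ℝ≥0∞ :=
  if r = ∞ then ⨆ k, x k else (∑' k, x k ^ r.toReal) ^ (r.toReal)⁻¹

/-- dyadic points -/
def dy (k : ℤ) : ℝ := (2:ℝ) ^ (k:ℝ)

lemma dy_pos (k : ℤ) : 0 < dy k := by unfold dy; positivity

lemma dy_succ (k : ℤ) : dy (k + 1) = 2 * dy k := by
  unfold dy; push_cast; rw [Real.rpow_add (by norm_num), Real.rpow_one]; ring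

lemma dy_exists {u : ℝ} (hu : 0 < u) : ∃ k : ℤ, dy k ≤ u ∧ u < dy (k + 1) := by
  refine ⟨⌊Real.logb 2 u⌋, ?_, ?_⟩
  · unfold dy
    rw [← Real.le_logb_iff_rpow_le (by norm_num) hu]
    exact Int.floor_le _
  · unfold dy
    rw [← Real.logb_lt_iff_lt_rpow (by norm_num) hu]
    push_cast
    exact Int.lt_floor_add_one _

lemma dy_mono {k l : ℤ} (h : k ≤ l) : dy k ≤ dy l := by
  unfold dy
  exact Real.rpow_le_rpow_of_exponent_le (by norm_num) (by exact_mod_cast h)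

lemma dy_disj : Pairwise (Function.onFun Disjoint fun k : ℤ => Ico (dy k) (dy (k + 1))) := by
  intro k l hkl
  rw [Function.onFun, Set.disjoint_left]
  intro u hu hv
  rcases lt_or_gt_of_ne hkl with h | h
  · have := dy_mono (show k + 1 ≤ l by omega)
    exact absurd hu.2 (not_lt.2 (this.trans hv.1))
  · have := dy_mono (show l + 1 ≤ k by omega)
    exact absurd hv.2 (not_lt.2 (this.trans hu.1))

lemma dy_union : (⋃ k : ℤ, Ico (dy k) (dy (k + 1))) = Ioi 0 := by
  ext u
  simp only [mem_iUnion, mem_Ico, mem_Ioi]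
  constructor
  · rintro ⟨k, h, -⟩
    exact (dy_pos k).trans_le h
  · exact fun hu => dy_exists hu

lemma disc_up {r : ℝ≥0∞} (hr : 0 < r) {D : ℝ≥0∞} (g : ℝ → ℝ≥0∞)
    (H : ∀ (k : ℤ) (u : ℝ), dy k ≤ u → u < dy (k + 1) → g u ≤ D * g (dy k)) :
    LqNorm r (Ioi 0) (fun u => ENNReal.ofReal (u ^ (-(r⁻¹.toReal))) * g u) ≤
      D * lr r (fun k => g (dy k)) := by
  by_cases hq : r = ∞
  · subst hq
    rw [LqNorm_top, lr, if_pos rfl]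
    refine essSup_le_of_ae_le _ ?_
    refine ae_restrict_of_forall_mem measurableSet_Ioi fun u hu => ?_
    obtain ⟨k, h1, h2⟩ := dy_exists hu
    simp only [inv_top, toReal_zero, neg_zero, Real.rpow_zero, ofReal_one, one_mul]
    refine (H k u h1 h2).trans ?_
    gcongr
    exact le_iSup (fun k => g (dy k)) k
  · have hp : 0 < r.toReal := ENNReal.toReal_pos hr.ne' hq
    rw [LqNorm_fin hq, lr, if_neg hq]
    set p := r.toReal with hpd
    have hle : ∫⁻ u in Ioi 0, (ENNReal.ofReal (u ^ (-(r⁻¹.toReal))) * g u) ^ p ≤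
        D ^ p * ∑' k : ℤ, g (dy k) ^ p := by
      rw [← dy_union, lintegral_iUnion (fun _ => measurableSet_Ico) dy_disj, ← ENNReal.tsum_mul_left]
      refine ENNReal.tsum_le_tsum fun k => ?_
      have hk := dy_pos k
      calc _ ≤ ∫⁻ u in Ico (dy k) (dy (k+1)), (ENNReal.ofReal (dy k)⁻¹ * (D ^ p * g (dy k) ^ p)) := by
            refine setLIntegral_mono' measurableSet_Ico fun u hu => ?_
            have hu0 : 0 < u := hk.trans_le hu.1
            rw [← ENNReal.mul_rpow_of_nonneg _ _ hp.le, ENNReal.mul_rpow_of_nonneg _ _ hp.le]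
            refine mul_le_mul' ?_ (ENNReal.rpow_le_rpow (H k u hu.1 hu.2) hp.le)
            rw [ENNReal.ofReal_rpow_of_pos (by positivity), ← Real.rpow_mul hu0.le, ENNReal.toReal_inv,
              ← hpd, neg_mul, inv_mul_cancel₀ hp.ne', Real.rpow_neg_one]
            apply ENNReal.ofReal_le_ofReal
            gcongr
            exact hu.1
        _ = _ := by
            rw [setLIntegral_const, Real.volume_Ico, dy_succ,
              show 2 * dy k - dy k = dy k by ring, mul_comm, ← mul_assoc, ← ENNReal.ofReal_mul hk.le,
              mul_inv_cancel₀ hk.ne', ENNReal.ofReal_one, one_mul]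
    calc _ ≤ (D ^ p * ∑' k : ℤ, g (dy k) ^ p) ^ p⁻¹ := by gcongr
      _ = _ := by rw [ENNReal.mul_rpow_of_nonneg _ _ (by positivity), ENNReal.rpow_rpow_inv hp.ne']

lemma disc_low {r : ℝ≥0∞} (hr : 0 < r) {D : ℝ≥0∞} (hD : D ≠ ∞) (hD1 : 1 ≤ D) :
    ∃ C : ℝ≥0∞, 1 ≤ C ∧ C ≠ ∞ ∧ ∀ (g : ℝ → ℝ≥0∞),
    (∀ (k : ℤ) (u : ℝ), dy k ≤ u → u < dy (k + 1) → g (dy k) ≤ D * g u) →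
      lr r (fun k => g (dy k)) ≤ C *
        LqNorm r (Ioi 0) (fun u => ENNReal.ofReal (u ^ (-(r⁻¹.toReal))) * g u) := by
  obtain ⟨L, hL1, hL2, hL⟩ := LqNorm_low r hr
  refine ⟨L * D, one_le_mul hL1 hD1, ENNReal.mul_ne_top hL2 hD, fun g H => ?_⟩
  set G := (fun u => ENNReal.ofReal (u ^ (-(r⁻¹.toReal))) * g u) with hG
  have key : ∀ k : ℤ, g (dy k) ≤ L * D * LqNorm r (Ioo (dy k) (dy (k+1))) G := by
    intro k
    have := hL (dy k) (g (dy k)) (fun u => D * G u) (dy_pos k) (fun u hu => by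
      rw [← dy_succ] at hu
      rw [hG]
      calc _ ≤ ENNReal.ofReal (u ^ (-(r⁻¹.toReal))) * (D * g u) :=
            mul_le_mul_right (H k u hu.1.le hu.2) _
        _ = _ := by ring)
    rw [LqNorm_const_mul hr _ hD, ← dy_succ] at this
    rw [mul_assoc]; exact this
  by_cases hq : r = ∞
  · rw [lr, if_pos hq]
    refine iSup_le fun k => (key k).trans ?_
    refine mul_le_mul_right (LqNorm_mono_set ?_ _) _
    exact fun u hu => (dy_pos k).trans hu.1
  · have hp : 0 < r.toReal := ENNReal.toReal_pos hr.ne' hq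
    rw [LqNorm_fin hq, lr, if_neg hq]
    simp only [LqNorm_fin hq] at key
    set p := r.toReal with hpd
    have : ∑' k : ℤ, g (dy k) ^ p ≤ (L * D) ^ p * ∫⁻ u in Ioi 0, G u ^ p := by
      rw [← dy_union, lintegral_iUnion (fun _ => measurableSet_Ico) dy_disj, ← ENNReal.tsum_mul_left]
      refine ENNReal.tsum_le_tsum fun k => ?_
      calc _ ≤ (L * D * (∫⁻ u in Ioo (dy k) (dy (k+1)), G u ^ p) ^ p⁻¹) ^ p :=
            ENNReal.rpow_le_rpow (key k) hp.le
        _ = (L * D) ^ p * ∫⁻ u in Ioo (dy k) (dy (k+1)), G u ^ p := by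
            rw [ENNReal.mul_rpow_of_nonneg _ _ hp.le, ENNReal.rpow_inv_rpow hp.ne']
        _ ≤ _ := mul_le_mul_right (lintegral_mono_set Ioo_subset_Ico_self) _
    calc _ ≤ ((L * D) ^ p * ∫⁻ u in Ioi 0, G u ^ p) ^ p⁻¹ := by gcongr
      _ = _ := by rw [ENNReal.mul_rpow_of_nonneg _ _ (by positivity), ENNReal.rpow_rpow_inv hp.ne']

lemma geom_Z (δ : ℝ) (hδ : 0 < δ) : ∑' m : ℤ, ENNReal.ofReal ((2:ℝ) ^ (-δ * |(m:ℝ)|)) ≠ ∞ := by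
  have hx1 : (2:ℝ) ^ (-δ) < 1 := Real.rpow_lt_one_of_one_lt_of_neg (by norm_num) (by linarith)
  have hs : Summable (fun n : ℕ => ((2:ℝ) ^ (-δ)) ^ n) :=
    summable_geometric_of_lt_one (by positivity) hx1
  have : Summable (fun m : ℤ => (2:ℝ) ^ (-δ * |(m:ℝ)|)) := by
    refine Summable.of_nat_of_neg ?_ ?_
    · refine hs.congr fun n => ?_
      rw [← Real.rpow_natCast, ← Real.rpow_mul (by norm_num)]
      congr 2
      simp
    · refine hs.congr fun n => ?_
      rw [← Real.rpow_natCast, ← Real.rpow_mul (by norm_num)]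
      congr 2
      simp
  rw [← ENNReal.ofReal_tsum_of_nonneg (fun _ => by positivity) this]
  exact ENNReal.ofReal_ne_top

lemma schur {r : ℝ≥0∞} (hr : 0 < r) (δ : ℝ) (hδ : 0 < δ) {C0 : ℝ≥0∞} (hC0 : C0 ≠ ∞) (hC1 : 1 ≤ C0) :
    ∃ C : ℝ≥0∞, 1 ≤ C ∧ C ≠ ∞ ∧ ∀ (φ : ℤ → ℤ) (x y : ℤ → ℝ≥0∞),
      (∀ k T, (∀ i, ENNReal.ofReal ((2:ℝ) ^ (-δ * |((k - φ i : ℤ) : ℝ)|)) * y i ≤ T) → x k ≤ C0 * T) →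
      lr r x ≤ C * lr r y := by
  by_cases hq : r = ∞
  · refine ⟨C0, hC1, hC0, fun φ x y H => ?_⟩
    rw [lr, lr, if_pos hq, if_pos hq]
    refine iSup_le fun k => H k _ fun i => ?_
    refine le_trans ?_ (le_iSup y i)
    refine mul_le_of_le_one_left zero_le ?_
    rw [ENNReal.ofReal_le_one]
    exact Real.rpow_le_one_of_one_le_of_nonpos (by norm_num)
      (by have := abs_nonneg ((k - φ i : ℤ) : ℝ); nlinarith)
  · have hp : 0 < r.toReal := ENNReal.toReal_pos hr.ne' hq
    set p := r.toReal with hpd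
    set S := ∑' m : ℤ, ENNReal.ofReal ((2:ℝ) ^ (-(δ * p) * |(m:ℝ)|)) with hS
    have hSf : S ≠ ∞ := geom_Z (δ * p) (by positivity)
    have hSS : 1 ≤ S := by
      refine le_trans ?_ (ENNReal.le_tsum 0)
      simp
    refine ⟨C0 * S ^ p⁻¹, one_le_mul hC1 (ENNReal.one_le_rpow hSS (by positivity)),
      ENNReal.mul_ne_top hC0 (ENNReal.rpow_ne_top_of_nonneg (by positivity) hSf), fun φ x y H => ?_⟩
    rw [lr, lr, if_neg hq, if_neg hq, ← hpd]
    have key : ∀ k, x k ^ p ≤ C0 ^ p *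
        ∑' i, ENNReal.ofReal ((2:ℝ) ^ (-(δ * p) * |((k - φ i : ℤ) : ℝ)|)) * y i ^ p := by
      intro k
      have e : ∀ i, ENNReal.ofReal ((2:ℝ) ^ (-(δ * p) * |((k - φ i : ℤ) : ℝ)|)) * y i ^ p =
          (ENNReal.ofReal ((2:ℝ) ^ (-δ * |((k - φ i : ℤ) : ℝ)|)) * y i) ^ p := by
        intro i
        rw [ENNReal.mul_rpow_of_nonneg _ _ hp.le, ENNReal.ofReal_rpow_of_pos (by positivity),
          ← Real.rpow_mul (by norm_num)]
        congr 3
        ring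
      have := H k ((∑' i, ENNReal.ofReal ((2:ℝ) ^ (-(δ * p) * |((k - φ i : ℤ) : ℝ)|)) * y i ^ p) ^ p⁻¹)
        (fun i => by
          rw [ENNReal.le_rpow_inv_iff hp, ← e i]
          exact ENNReal.le_tsum (f := fun i => ENNReal.ofReal ((2:ℝ) ^ (-(δ * p) * |((k - φ i : ℤ) : ℝ)|)) * y i ^ p) i)
      have := ENNReal.rpow_le_rpow this hp.le
      rwa [ENNReal.mul_rpow_of_nonneg _ _ hp.le, ENNReal.rpow_inv_rpow hp.ne'] at this
    have : ∑' k, x k ^ p ≤ C0 ^ p * (S * ∑' i, y i ^ p) := by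
      refine (ENNReal.tsum_le_tsum key).trans ?_
      rw [ENNReal.tsum_mul_left, ENNReal.tsum_comm, ← ENNReal.tsum_mul_left (a := S)]
      refine mul_le_mul_right (ENNReal.tsum_le_tsum fun i => ?_) _
      rw [ENNReal.tsum_mul_right, hS]
      refine mul_le_mul_left (le_of_eq ?_) _
      exact (Equiv.subRight (φ i)).tsum_eq (fun m : ℤ => ENNReal.ofReal ((2:ℝ) ^ (-(δ * p) * |(m:ℝ)|)))
    calc _ ≤ (C0 ^ p * (S * ∑' i, y i ^ p)) ^ p⁻¹ := by gcongr
      _ = _ := by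
        rw [ENNReal.mul_rpow_of_nonneg _ _ (by positivity), ENNReal.mul_rpow_of_nonneg _ _ (by positivity),
          ENNReal.rpow_rpow_inv hp.ne', mul_assoc]

lemma index (l : ℤ → ℝ) (α β C : ℝ) (hα : 0 < α) (hβ : 0 < β) (hC : 0 ≤ C)
    (H : ∀ i j : ℤ, i ≤ j → α * (j - i) - C ≤ l j - l i ∧ l j - l i ≤ β * (j - i) + C) :
    ∃ B : ℝ, 1 ≤ B ∧ ∃ J : ℤ → ℤ, ∀ k : ℤ, |l (J k) - k| ≤ B ∧ ∀ i : ℤ,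
      |((k - ⌊l i⌋ : ℤ) : ℝ)| ≤ β * |((J k - i : ℤ) : ℝ)| + B ∧
      α * |((J k - i : ℤ) : ℝ)| ≤ |((k - ⌊l i⌋ : ℤ) : ℝ)| + B := by
  have hJ : ∀ k : ℤ, ∃ j : ℤ, l j ≤ k ∧ ∀ z : ℤ, l z ≤ k → z ≤ j := by
    intro k
    apply Int.exists_greatest_of_bdd
    · refine ⟨max 0 ⌈(k - l 0 + C) / α⌉, fun z hz => ?_⟩
      by_contra hcon
      rw [not_le, max_lt_iff] at hcon
      obtain ⟨h1, h2⟩ := hcon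
      have h3 := (H 0 z h1.le).1
      have h4 : (k - l 0 + C) / α < z := (Int.le_ceil _).trans_lt (by exact_mod_cast h2)
      rw [div_lt_iff₀ hα] at h4
      push_cast at h3
      linarith
    · refine ⟨min 0 (⌊(k - l 0 - C) / α⌋), ?_⟩
      have h1 := (H _ 0 (min_le_left 0 (⌊(k - l 0 - C) / α⌋))).1
      set m := min 0 (⌊(k - l 0 - C) / α⌋) with hm
      have h2 : (m:ℝ) ≤ (k - l 0 - C) / α :=
        le_trans (by exact_mod_cast min_le_right _ _) (Int.floor_le _)
      rw [le_div_iff₀ hα] at h2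
      push_cast at h1
      linarith
  choose J hJ1 hJ2 using hJ
  refine ⟨β + 2 * C + 1, by linarith, J, fun k => ?_⟩
  have hk : |l (J k) - k| ≤ β + C := by
    have h1 := hJ1 k
    have h2 : (k:ℝ) < l (J k + 1) := by
      by_contra h
      have := hJ2 k _ (not_lt.1 h)
      omega
    have h3 := (H (J k) (J k + 1) (by omega)).2
    push_cast at h3
    rw [abs_le]
    constructor <;> linarith
  refine ⟨by linarith, fun i => ?_⟩
  have f1 := Int.floor_le (l i)
  have f2 := (Int.lt_floor_add_one (l i)).le
  rw [abs_le] at hk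
  obtain ⟨hk1, hk2⟩ := hk
  have hab : α * |((J k - i : ℤ) : ℝ)| - C ≤ |l (J k) - l i| ∧
      |l (J k) - l i| ≤ β * |((J k - i : ℤ) : ℝ)| + C := by
    push_cast
    rcases le_total i (J k) with h | h
    · have h' : (0:ℝ) ≤ (J k : ℝ) - i := by
        rw [sub_nonneg]; exact_mod_cast h
      obtain ⟨h1, h2⟩ := H _ _ h
      rw [abs_of_nonneg h']
      refine ⟨h1.trans (le_abs_self _), abs_le.2 ⟨?_, h2⟩⟩
      nlinarith [mul_nonneg hα.le h', mul_nonneg hβ.le h']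
    · have h' : (J k : ℝ) - i ≤ 0 := by
        rw [sub_nonpos]; exact_mod_cast h
      obtain ⟨h1, h2⟩ := H _ _ h
      rw [abs_of_nonpos h', abs_sub_comm]
      refine ⟨by linarith [le_abs_self (l i - l (J k))], abs_le.2 ⟨?_, by linarith⟩⟩
      nlinarith [mul_nonneg hα.le (neg_nonneg.2 h'), mul_nonneg hβ.le (neg_nonneg.2 h')]
  obtain ⟨h1, h2⟩ := hab
  have t1 : |((k - ⌊l i⌋ : ℤ) : ℝ)| ≤ |l (J k) - l i| + (β + C + 1) := by
    push_cast
    rw [abs_le]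
    have := le_abs_self (l (J k) - l i)
    have := neg_abs_le (l (J k) - l i)
    constructor <;> linarith
  have t2 : |l (J k) - l i| ≤ |((k - ⌊l i⌋ : ℤ) : ℝ)| + (β + C + 1) := by
    push_cast
    have := le_abs_self ((k:ℝ) - ⌊l i⌋)
    have := neg_abs_le ((k:ℝ) - ⌊l i⌋)
    rw [abs_le]
    constructor <;> linarith
  constructor <;> linarith

lemma transfer {ρ : ℝ → ℝ} {α β : ℝ} (hρ : PB ρ α β) (hα : 0 < α) (hβ : 0 < β)
    {r : ℝ≥0∞} (hr : 0 < r) (δ : ℝ) (hδ : 0 < δ) (DD : ℝ → ℝ≥0∞) (hDD : ∀ M, 1 ≤ M → DD M ≠ ∞ ∧ 1 ≤ DD M)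
    (C0 : ℝ≥0∞) (hC0 : C0 ≠ ∞) (hC1 : 1 ≤ C0) :
    ∃ C : ℝ≥0∞, 1 ≤ C ∧ C ≠ ∞ ∧ ∀ y G : ℝ → ℝ≥0∞,
      (∀ M, 1 ≤ M → ∀ t s, 0 < t → 0 < s → t ≤ M * s → s ≤ M * t → y s ≤ DD M * y t) →
      (∀ M, 1 ≤ M → ∀ t s, 0 < t → 0 < s → t ≤ M * s → s ≤ M * t → G s ≤ DD M * G t) →
      (∀ t, 0 < t → y t ≤ C0 * G (ρ t)) →
      (∀ t T, 0 < t → (∀ s, 0 < s → ENNReal.ofReal ((min (s / t) (t / s)) ^ δ) * y s ≤ T) →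
        G (ρ t) ≤ C0 * T) →
      LqNorm r (Ioi 0) (fun u => ENNReal.ofReal (u ^ (-(r⁻¹.toReal))) * G u) ≤
        C * LqNorm r (Ioi 0) (fun u => ENNReal.ofReal (u ^ (-(r⁻¹.toReal))) * y u) ∧
      LqNorm r (Ioi 0) (fun u => ENNReal.ofReal (u ^ (-(r⁻¹.toReal))) * y u) ≤
        C * LqNorm r (Ioi 0) (fun u => ENNReal.ofReal (u ^ (-(r⁻¹.toReal))) * G u) := by
  obtain ⟨hρp, Cρ, hCρ⟩ := hρ
  have hl2 : 0 < Real.log 2 := Real.log_pos (by norm_num)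
  obtain ⟨B, hB1, J, hJ⟩ := index (fun j => Real.logb 2 (ρ (dy j))) α β (|Cρ| / Real.log 2) hα hβ
    (by positivity) (fun i j hij => by
      obtain ⟨h1, h2⟩ := hCρ (dy i) (dy j) (dy_pos i) (dy_mono hij)
      unfold dy at h1 h2
      rw [Real.log_rpow (by norm_num), Real.log_rpow (by norm_num)] at h1 h2
      simp only [Real.logb, dy]
      have hc := le_abs_self Cρ
      rw [← sub_div]
      constructor
      · rw [le_div_iff₀ hl2, sub_mul, div_mul_cancel₀ _ hl2.ne']
        linarith
      · rw [div_le_iff₀ hl2, add_mul, div_mul_cancel₀ _ hl2.ne']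
        linarith)
  set l : ℤ → ℝ := fun j => Real.logb 2 (ρ (dy j)) with hl
  have hρl : ∀ j, ρ (dy j) = (2:ℝ) ^ (l j) := fun j =>
    (Real.rpow_logb (by norm_num) (by norm_num) (hρp _ (dy_pos j))).symm
  have hB0 : 0 < B := by linarith
  have hM1 : (1:ℝ) ≤ 2 ^ B := Real.one_le_rpow (by norm_num) hB0.le
  obtain ⟨hE2, hE1⟩ := hDD 2 (by norm_num)
  obtain ⟨hF2, hF1⟩ := hDD (2 ^ B) hM1
  set K1 : ℝ := 2 ^ δ * 2 ^ (δ / β * B) with hK1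
  have hK1' : 1 ≤ K1 := by
    have h1 : (1:ℝ) ≤ 2 ^ δ := Real.one_le_rpow (by norm_num) hδ.le
    have h2 : (1:ℝ) ≤ 2 ^ (δ / β * B) := Real.one_le_rpow (by norm_num) (by positivity)
    exact one_le_mul_of_one_le_of_one_le h1 h2
  obtain ⟨S1, hS11, hS12, hS1⟩ := schur hr (δ / β) (by positivity)
    (C0 := DD (2 ^ B) * (C0 * (ENNReal.ofReal K1 * DD 2)))
    (ENNReal.mul_ne_top hF2 (ENNReal.mul_ne_top hC0 (ENNReal.mul_ne_top (by simp) hE2)))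
    (one_le_mul hF1 (one_le_mul hC1 (one_le_mul (by simpa using hK1') hE1)))
  set K2 : ℝ := 2 ^ (B / α) with hK2
  have hK2' : 1 ≤ K2 := Real.one_le_rpow (by norm_num) (by positivity)
  obtain ⟨S2, hS21, hS22, hS2⟩ := schur hr 1 one_pos
    (C0 := C0 * (DD 2 * ENNReal.ofReal K2))
    (ENNReal.mul_ne_top hC0 (ENNReal.mul_ne_top hE2 (by simp)))
    (one_le_mul hC1 (one_le_mul hE1 (by simpa using hK2')))
  obtain ⟨L, hL1, hL2, hL⟩ := disc_low hr hE2 hE1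
  have hS1L : 1 ≤ S1 + S2 := hS11.trans le_self_add
  refine ⟨DD 2 * ((S1 + S2) * L), one_le_mul hE1 (one_le_mul hS1L hL1),
    ENNReal.mul_ne_top hE2 (ENNReal.mul_ne_top (ENNReal.add_ne_top.2 ⟨hS12, hS22⟩) hL2),
    fun y G hy hG hyG hGy => ?_⟩
  have near : ∀ (k : ℤ) (u : ℝ), dy k ≤ u → u < dy (k + 1) → dy k ≤ 2 * u ∧ u ≤ 2 * dy k ∧ 0 < u := by
    intro k u h1 h2
    rw [dy_succ] at h2
    have := dy_pos k
    exact ⟨by linarith, h2.le, by linarith⟩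
  have up : ∀ g : ℝ → ℝ≥0∞,
      (∀ M, 1 ≤ M → ∀ t s, 0 < t → 0 < s → t ≤ M * s → s ≤ M * t → g s ≤ DD M * g t) →
      LqNorm r (Ioi 0) (fun u => ENNReal.ofReal (u ^ (-(r⁻¹.toReal))) * g u) ≤
        DD 2 * lr r (fun k => g (dy k)) := by
    intro g hg
    refine disc_up hr g fun k u h1 h2 => ?_
    obtain ⟨h3, h4, h5⟩ := near k u h1 h2
    exact hg 2 (by norm_num) _ _ (dy_pos k) h5 h3 h4
  have low : ∀ g : ℝ → ℝ≥0∞,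
      (∀ M, 1 ≤ M → ∀ t s, 0 < t → 0 < s → t ≤ M * s → s ≤ M * t → g s ≤ DD M * g t) →
      lr r (fun k => g (dy k)) ≤ L *
      LqNorm r (Ioi 0) (fun u => ENNReal.ofReal (u ^ (-(r⁻¹.toReal))) * g u) := by
    intro g hg
    refine hL g fun k u h1 h2 => ?_
    obtain ⟨h3, h4, h5⟩ := near k u h1 h2
    exact hg 2 (by norm_num) _ _ h5 (dy_pos k) h4 h3
  have m1 : lr r (fun k => G (dy k)) ≤ S1 * lr r (fun k => y (dy k)) := by
    refine hS1 (fun i => ⌊l i⌋) _ _ fun k T hT => ?_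
    obtain ⟨hJ1, hJ2⟩ := hJ k
    rw [abs_le] at hJ1
    have s1 : G (dy k) ≤ DD (2 ^ B) * G (ρ (dy (J k))) := by
      refine hG _ hM1 _ _ (hρp _ (dy_pos _)) (dy_pos k) ?_ ?_
      · rw [hρl, dy, ← Real.rpow_add (by norm_num)]
        exact Real.rpow_le_rpow_of_exponent_le (by norm_num) (by linarith)
      · rw [hρl, dy, ← Real.rpow_add (by norm_num)]
        exact Real.rpow_le_rpow_of_exponent_le (by norm_num) (by linarith)
    refine s1.trans ?_
    rw [mul_assoc]
    refine mul_le_mul_right ?_ _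
    rw [mul_assoc]
    refine hGy _ _ (dy_pos _) fun s hs => ?_
    obtain ⟨i, hi1, hi2⟩ := dy_exists hs
    obtain ⟨h3, h4, h5⟩ := near i s hi1 hi2
    have s2 : y s ≤ DD 2 * y (dy i) := hy 2 (by norm_num) _ _ (dy_pos i) h5 h3 h4
    have s3 : (min (s / dy (J k)) (dy (J k) / s)) ^ δ ≤
        K1 * (2:ℝ) ^ (-(δ / β) * |((k - ⌊l i⌋ : ℤ) : ℝ)|) := by
      have e1 : min (s / dy (J k)) (dy (J k) / s) ≤ 2 ^ (1 - |((J k - i : ℤ) : ℝ)|) := by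
        push_cast
        rcases le_total (J k) i with h | h
        · have h' : (J k : ℝ) - i ≤ 0 := by
            rw [sub_nonpos]; exact_mod_cast h
          refine (min_le_right _ _).trans ?_
          rw [abs_of_nonpos h', div_le_iff₀ hs]
          calc dy (J k) = 2 ^ ((J k : ℝ) - i) * dy i := by
                unfold dy; rw [← Real.rpow_add (by norm_num)]; congr 1; ring
            _ ≤ _ := by
                refine mul_le_mul (Real.rpow_le_rpow_of_exponent_le (by norm_num) ?_) hi1
                  (dy_pos i).le (by positivity)
                linarith
        · have h' : 0 ≤ (J k : ℝ) - i := by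
            rw [sub_nonneg]; exact_mod_cast h
          refine (min_le_left _ _).trans ?_
          rw [abs_of_nonneg h', div_le_iff₀ (dy_pos _)]
          refine h4.trans (le_of_eq ?_)
          rw [← dy_succ]
          unfold dy; rw [← Real.rpow_add (by norm_num)]; congr 1; push_cast; ring
      have hmin : 0 ≤ min (s / dy (J k)) (dy (J k) / s) := by
        have := dy_pos (J k)
        positivity
      refine (Real.rpow_le_rpow hmin e1 hδ.le).trans ?_
      rw [hK1, ← Real.rpow_mul (by norm_num), ← Real.rpow_add (by norm_num), ← Real.rpow_add (by norm_num)]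
      apply Real.rpow_le_rpow_of_exponent_le (by norm_num)
      have := (hJ2 i).1
      have h6 : δ / β * |((k - ⌊l i⌋ : ℤ) : ℝ)| ≤ δ / β * (β * |((J k - i : ℤ) : ℝ)| + B) := by gcongr
      have h7 : δ / β * (β * |((J k - i : ℤ) : ℝ)| + B) = δ * |((J k - i : ℤ) : ℝ)| + δ / β * B := by
        field_simp
      linarith
    calc _ ≤ ENNReal.ofReal (K1 * (2:ℝ) ^ (-(δ / β) * |((k - ⌊l i⌋ : ℤ) : ℝ)|)) * (DD 2 * y (dy i)) := by
          gcongr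
      _ = ENNReal.ofReal K1 * (DD 2 * (ENNReal.ofReal ((2:ℝ) ^ (-(δ / β) * |((k - ⌊l i⌋ : ℤ) : ℝ)|)) * y (dy i))) := by
          rw [ENNReal.ofReal_mul (by positivity)]; ring
      _ ≤ ENNReal.ofReal K1 * (DD 2 * T) := mul_le_mul_right (mul_le_mul_right (hT i) _) _
      _ = _ := by ring
  have m2 : lr r (fun k => y (dy k)) ≤ S2 * lr r (fun k => G (dy k)) := by
    refine hS2 J _ _ fun j T hT => ?_
    have f1 := Int.floor_le (l j)
    have f2 := (Int.lt_floor_add_one (l j)).le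
    have s1 : y (dy j) ≤ C0 * (DD 2 * G (dy ⌊l j⌋)) := by
      refine (hyG _ (dy_pos j)).trans (mul_le_mul_right ?_ _)
      refine hG 2 (by norm_num) _ _ (dy_pos _) (hρp _ (dy_pos j)) ?_ ?_
      · rw [hρl, dy]
        have : (2:ℝ) ^ ((⌊l j⌋ : ℤ) : ℝ) ≤ 2 ^ l j :=
          Real.rpow_le_rpow_of_exponent_le (by norm_num) f1
        have : (0:ℝ) < 2 ^ l j := by positivity
        linarith
      · rw [hρl, ← dy_succ, dy]
        exact Real.rpow_le_rpow_of_exponent_le (by norm_num) (by push_cast; exact f2)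
    have h1 := hT ⌊l j⌋
    have h2 : α * |((J ⌊l j⌋ - j : ℤ) : ℝ)| ≤ |((⌊l j⌋ - ⌊l j⌋ : ℤ) : ℝ)| + B := ((hJ ⌊l j⌋).2 j).2
    rw [sub_self] at h2
    simp only [Int.cast_zero, abs_zero, zero_add] at h2
    have h3 : 1 ≤ K2 * (2:ℝ) ^ (-1 * |((j - J ⌊l j⌋ : ℤ) : ℝ)|) := by
      rw [hK2, ← Real.rpow_add (by norm_num)]
      apply Real.one_le_rpow (by norm_num)
      have : |((j - J ⌊l j⌋ : ℤ) : ℝ)| ≤ B / α := by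
        rw [le_div_iff₀ hα, mul_comm]
        push_cast at h2 ⊢
        rw [abs_sub_comm]
        exact h2
      linarith
    have h4 : G (dy ⌊l j⌋) ≤ ENNReal.ofReal K2 * T := by
      calc G (dy ⌊l j⌋) ≤ ENNReal.ofReal (K2 * (2:ℝ) ^ (-1 * |((j - J ⌊l j⌋ : ℤ) : ℝ)|)) * G (dy ⌊l j⌋) :=
            le_mul_of_one_le_left zero_le (by simpa using h3)
        _ = ENNReal.ofReal K2 * (ENNReal.ofReal ((2:ℝ) ^ (-1 * |((j - J ⌊l j⌋ : ℤ) : ℝ)|)) * G (dy ⌊l j⌋)) := by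
            rw [ENNReal.ofReal_mul (by positivity)]; ring
        _ ≤ _ := by gcongr
    refine s1.trans ?_
    rw [mul_assoc, mul_assoc]
    gcongr
  constructor
  · calc _ ≤ _ := up G hG
      _ ≤ DD 2 * (S1 * (L * _)) :=
        mul_le_mul_right (m1.trans (mul_le_mul_right (low y hy) _)) _
      _ ≤ DD 2 * ((S1 + S2) * (L * _)) := by gcongr; exact le_self_add
      _ = _ := by ring
  · calc _ ≤ _ := up y hy
      _ ≤ DD 2 * (S2 * (L * _)) :=
        mul_le_mul_right (m2.trans (mul_le_mul_right (low G hG) _)) _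
      _ ≤ DD 2 * ((S1 + S2) * (L * _)) := by gcongr; exact le_add_self
      _ = _ := by ring


lemma aux_real {m X Y C b γ δ : ℝ} (hm : 0 < m) (hm1 : m ≤ 1) (hX : 0 < X) (hY : 0 < Y) (hC : 1 ≤ C)
    (h : X ≤ C * m ^ b * Y) (hb : γ + δ ≤ b) : m ^ (-δ) / Y ≤ m ^ γ * (C / X) := by
  have h1 : m ^ b ≤ m ^ (γ + δ) := Real.rpow_le_rpow_of_exponent_ge hm hm1 hb
  have h2 : X ≤ C * m ^ (γ + δ) * Y := h.trans (by gcongr)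
  have h3 : m ^ (-δ) * m ^ (γ + δ) = m ^ γ := by rw [← Real.rpow_add hm]; congr 1; ring
  rw [div_le_iff₀ hY, mul_div_assoc', div_mul_eq_mul_div, le_div_iff₀ hX, ← h3]
  have h4 : 0 < m ^ (-δ) := Real.rpow_pos_of_pos hm _
  calc _ ≤ m ^ (-δ) * (C * m ^ (γ + δ) * Y) := by gcongr
    _ = _ := by ring

lemma aux_enn {m X Y w C b γ δ : ℝ} {KK TT : ℝ≥0∞} (hm : 0 < m) (hm1 : m ≤ 1) (hX : 0 < X) (hY : 0 < Y)
    (hC : 1 ≤ C) (hw : 0 < w)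
    (h : X ≤ C * m ^ b * Y) (hb : γ + δ ≤ b)
    (hT : ENNReal.ofReal (m ^ δ) * (ENNReal.ofReal (Y * w) * KK) ≤ TT) :
    ENNReal.ofReal w * KK ≤ ENNReal.ofReal (m ^ γ * (C / X)) * TT := by
  have h1 := aux_real hm hm1 hX hY hC h hb
  have h4 : 0 < m ^ (-δ) := Real.rpow_pos_of_pos hm _
  have h5 : 0 < m ^ δ := Real.rpow_pos_of_pos hm _
  calc ENNReal.ofReal w * KK = ENNReal.ofReal (m ^ (-δ) / Y) *
        (ENNReal.ofReal (m ^ δ) * (ENNReal.ofReal (Y * w) * KK)) := by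
        rw [← mul_assoc, ← mul_assoc, mul_assoc (ENNReal.ofReal (m ^ (-δ) / Y)), ← ENNReal.ofReal_mul h5.le,
          ← ENNReal.ofReal_mul (by positivity)]
        congr 2
        rw [Real.rpow_neg hm.le]
        field_simp
    _ ≤ _ := mul_le_mul' (ENNReal.ofReal_le_ofReal h1) hT

theorem theorem16
    (A₀ A₁ : QuasiBanach E)
    (hne : ∃ x : E, x ≠ 0 ∧ A₀.N x ≠ ∞ ∧ A₁.N x ≠ ∞)
    (θ θ₁ : ℝ) (hθ : 0 < θ) (hθ' : θ < 1) (hθ₁ : 0 < θ₁) (hθ₁' : θ₁ < 1)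
    (r r₀ r₁ q₁ : ℝ≥0∞) (hr : 0 < r) (hr₀ : 0 < r₀) (hr₁ : 0 < r₁) (hq₁ : 0 < q₁)
    (a a₁ b₀ b₁ : ℝ → ℝ)
    (h_sv_a : SlowlyVarying a)
    (h_sv_a₁ : SlowlyVarying a₁)
    (h_sv_b₀ : SlowlyVarying b₀)
    (h_sv_b₁ : SlowlyVarying b₁)
    (hfin₀ : LqNorm r₀ (Ioi 1) (svWgt r₀ (fun s => b₀ s)) ≠ ∞)
    (hfin₁ : LqNorm r₁ (Ioi 1) (svWgt r₁ (fun s => b₁ s / a₁ s)) ≠ ∞)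
    (c₀ c₁ ρ : ℝ → ℝ)
    (hc₀ : ∀ t, c₀ t = (LqNorm r₀ (Ioi t) (svWgt r₀ (fun s => b₀ s))).toReal)
    (hc₁ : ∀ t, c₁ t = a₁ t * (LqNorm r₁ (Ioi t) (svWgt r₁ (fun s => b₁ s / a₁ s))).toReal)
    (hρ : ∀ t, ρ t = t ^ θ₁ * (c₀ t / c₁ t)) :
    EquivNorms
      (normK (normK A₀.N A₁.N 0 r₀ b₀) (normL A₀.N A₁.N θ₁ r₁ q₁ b₁ a₁) θ r a)
      (normK A₀.N A₁.N (θ * θ₁) r (fun t => c₀ t ^ (1 - θ) * c₁ t ^ θ * a (ρ t))) := by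
  have ha := SVB.of_sv h_sv_a
  have ha₁ := SVB.of_sv h_sv_a₁
  have hb₀ := SVB.of_sv h_sv_b₀
  have hb₁ := SVB.of_sv h_sv_b₁
  have hba : SVB (fun s => b₁ s / a₁ s) := hb₁.div ha₁
  set d₁ : ℝ → ℝ := fun t => (LqNorm r₁ (Ioi t) (svWgt r₁ (fun s => b₁ s / a₁ s))).toReal with hd₁def
  have hd₁S : SVB d₁ := tail_SVB hr₁ hba hfin₁
  have hd₀S : SVB c₀ := by
    have := tail_SVB hr₀ hb₀ hfin₀
    rwa [show (fun t => (LqNorm r₀ (Ioi t) (svWgt r₀ b₀)).toReal) = c₀ from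
      funext fun t => (hc₀ t).symm] at this
  have hd₀ : ∀ t, 0 < t → ENNReal.ofReal (c₀ t) = LqNorm r₀ (Ioi t) (svWgt r₀ b₀) := by
    intro t ht
    rw [hc₀, ENNReal.ofReal_toReal (tail_ne_top hr₀ hb₀ hfin₀ t ht)]
  have hd₁ : ∀ t, 0 < t → ENNReal.ofReal (d₁ t) = LqNorm r₁ (Ioi t) (svWgt r₁ (fun s => b₁ s / a₁ s)) := by
    intro t ht
    rw [hd₁def, ENNReal.ofReal_toReal (tail_ne_top hr₁ hba hfin₁ t ht)]
  have hc₁' : ∀ t, c₁ t = a₁ t * d₁ t := hc₁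
  have hρ' : ∀ t, 0 < t → ρ t = t ^ θ₁ * (c₀ t / (a₁ t * d₁ t)) := by
    intro t ht
    rw [hρ, hc₁']
  have hρPB : PB ρ (θ₁ / 2) (3 * θ₁ / 2) :=
    (((PB.pow_id θ₁).mul ((hd₀S.div (ha₁.mul hd₁S)) (θ₁ / 2) (by positivity))).congr hρ').mono
      (by linarith) (by linarith)
  have hρp := hρPB.1
  have haρ : SVB (fun t => a (ρ t)) := ha.comp hρPB
  have hθm : 0 < 1 - θ := by linarith
  set b : ℝ := min θ (1 - θ) * θ₁ / 4 with hbdef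
  have hmin : 0 < min θ (1 - θ) := lt_min hθ hθm
  have hb0 : 0 < b := by positivity
  have hbθ : b ≤ θ * θ₁ / 4 := by
    rw [hbdef]; gcongr; exact min_le_left _ _
  have hbθ' : b ≤ (1 - θ) * θ₁ / 4 := by
    rw [hbdef]; gcongr; exact min_le_right _ _
  set ω : ℝ → ℝ := fun t => ρ t ^ (-θ) * a (ρ t) with hω
  have hωPB : PB ω (-(θ * (3 * θ₁ / 2)) - b) (-b) := by
    refine (((hρPB.rpow_nonneg hθ.le).inv.mul (haρ b hb0)).congr ?_).mono (by linarith) (by linarith)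
    intro t ht
    rw [hω]
    simp only
    rw [Real.rpow_neg (hρp t ht).le]
  have hωp := hωPB.1
  have hωρPB : PB (fun t => ω t * ρ t) b ((1 - θ) * (3 * θ₁ / 2) + b) := by
    refine (((hρPB.rpow_nonneg hθm.le).mul (haρ b hb0)).congr ?_).mono (by linarith) (by linarith)
    intro t ht
    rw [hω]
    simp only
    rw [show 1 - θ = -θ + 1 by ring, Real.rpow_add (hρp t ht), Real.rpow_one]
    ring
  have hwy : PB (fun t => ω t * c₀ t) _ _ := hωPB.mul (hd₀S 1 one_pos)
  have hwG : PB (fun u => u ^ (-θ) * a u) _ _ := (PB.pow_id (-θ)).mul (ha 1 one_pos)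
  choose D1 hD11 hD12 hD1 using fun (M : ℝ) (hM : 1 ≤ M) => Kf_doubling (E := E) hwy M hM
  choose D2 hD21 hD22 hD2 using fun (M : ℝ) (hM : 1 ≤ M) => Kf_doubling (E := E) hwG M hM
  obtain ⟨Cl, hCl1, hCl2, hCl⟩ := lower_pt A₀ A₁ θ₁ r₀ r₁ q₁ hr₀ hr₁ hq₁ a₁ b₀ b₁ ha₁ hb₀ hb₁ c₀ d₁ ρ hd₀ hd₁
    hd₀S.pos hd₁S.pos hρ'
  set γ : ℝ := min (min (b / 2) (1 / 2)) (min (θ₁ / 2) ((1 - θ₁) / 2)) with hγdef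
  have hγ : 0 < γ := by
    refine lt_min (lt_min (by positivity) (by norm_num)) (lt_min (by positivity) ?_)
    linarith
  have hγb : γ ≤ b / 2 := (min_le_left _ _).trans (min_le_left _ _)
  obtain ⟨Cu, hCu1, hCu2, hCu⟩ := upper_pt A₀ A₁ θ₁ r₀ r₁ q₁ hr₀ hr₁ hq₁ a₁ b₀ b₁ ha₁ hb₀ hb₁ c₀ d₁ ρ hd₀ hd₁
    hd₀S hd₁S hρ' γ hγ ((min_le_left _ _).trans (min_le_right _ _))
    ((min_le_right _ _).trans (min_le_left _ _)) ((min_le_right _ _).trans (min_le_right _ _))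
  obtain ⟨P, hP1, hP⟩ := hωPB.bounds
  obtain ⟨Q, hQ1, hQ⟩ := hωρPB.bounds
  set R : ℝ := max P Q with hR
  have hR1 : 1 ≤ R := hP1.trans (le_max_left _ _)
  have hCuR : Cu * ENNReal.ofReal R ≠ ∞ := ENNReal.mul_ne_top hCu2 (by simp)
  obtain ⟨C, hC1, hC2, hC⟩ := transfer hρPB (by positivity) (by positivity) hr (b / 2) (by positivity)
    (fun M => if h : 1 ≤ M then D1 M h + D2 M h else 1)
    (fun M hM => by
      rw [dif_pos hM]
      exact ⟨ENNReal.add_ne_top.2 ⟨hD12 M hM, hD22 M hM⟩, (hD11 M hM).trans le_self_add⟩)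
    (Cl + Cu * ENNReal.ofReal R) (ENNReal.add_ne_top.2 ⟨hCl2, hCuR⟩) (hCl1.trans le_self_add)
  refine ⟨C, lt_of_lt_of_le one_pos hC1, hC2, fun f => ?_⟩
  set N0 := normK A₀.N A₁.N 0 r₀ b₀ with hN0
  set N1 := normL A₀.N A₁.N θ₁ r₁ q₁ b₁ a₁ with hN1
  obtain ⟨hfin1, hfin2⟩ := hC (fun s => ENNReal.ofReal (ω s * c₀ s) * Kf A₀.N A₁.N s f)
    (fun u => ENNReal.ofReal (u ^ (-θ) * a u) * Kf N0 N1 u f)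
    (fun M hM t s ht hs h1 h2 => by
      rw [dif_pos hM]
      exact (hD1 M hM _ _ f t s ht hs h1 h2).trans (mul_le_mul_left le_self_add _))
    (fun M hM t s ht hs h1 h2 => by
      rw [dif_pos hM]
      exact (hD2 M hM _ _ f t s ht hs h1 h2).trans (mul_le_mul_left le_add_self _))
    (fun t ht => by
      have hw := hωp t ht
      calc ENNReal.ofReal (ω t * c₀ t) * Kf A₀.N A₁.N t f
          = ENNReal.ofReal (ω t) * (ENNReal.ofReal (c₀ t) * Kf A₀.N A₁.N t f) := by
            rw [ENNReal.ofReal_mul hw.le, mul_assoc]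
        _ ≤ ENNReal.ofReal (ω t) * (Cl * Kf N0 N1 (ρ t) f) := mul_le_mul_right (hCl f t ht) _
        _ = Cl * (ENNReal.ofReal (ω t) * Kf N0 N1 (ρ t) f) := by ring
        _ ≤ _ := mul_le_mul_left le_self_add _)
    (fun t T ht hT => by
      have hw := hωp t ht
      have hr' := hρp t ht
      have h1 := hCu f t (ENNReal.ofReal (R / ω t) * T) ht
        (fun u hu hut => by
          rw [← mul_assoc, ← ENNReal.ofReal_mul (by positivity)]
          have hm : 0 < u / t := by positivity
          have hm1 : u / t ≤ 1 := (div_le_one ht).2 hut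
          refine aux_enn (Y := ω u) (b := b) (δ := b / 2) hm hm1 hw (hωp u hu) hR1 (hd₀S.pos u hu) ?_
            (by linarith) ?_
          · have := (hP u t hu hut).1
            rw [neg_neg] at this
            refine this.trans ?_
            have := hωp u hu
            gcongr
            exact le_max_left _ _
          · have := hT u hu
            rwa [min_eq_left (hm1.trans ((one_le_div hu).2 hut))] at this)
        (fun u hut => by
          have hu : 0 < u := ht.trans_le hut
          have hru := hρp u hu
          have hwu := hωp u hu
          have hau := ha₁.pos u hu
          have hdu := hd₁S.pos u hu
          have hcu := hd₀S.pos u hu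
          have hm : 0 < t / u := by positivity
          have hm1 : t / u ≤ 1 := (div_le_one hu).2 hut
          have e : u ^ (-θ₁) * a₁ u * d₁ u = c₀ u / ρ u := by
            rw [hρ' u hu, Real.rpow_neg hu.le]
            have : 0 < u ^ θ₁ := by positivity
            field_simp
          rw [e, ← mul_assoc, ← ENNReal.ofReal_mul (by positivity)]
          have := aux_enn (m := t / u) (X := ω t * ρ t) (Y := ω u * ρ u) (b := b) (δ := b / 2) (γ := γ)
            (w := c₀ u / ρ u) (KK := Kf A₀.N A₁.N u f) (TT := T) (C := R)
            hm hm1 (by positivity) (by positivity) hR1 (by positivity)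
            (((hQ t u ht hut).2).trans (by gcongr; exact le_max_right _ _)) (by linarith)
            (by
              have h2 := hT u hu
              rw [min_eq_right (hm1.trans ((one_le_div ht).2 hut))] at h2
              rwa [show ω u * ρ u * (c₀ u / ρ u) = ω u * c₀ u by field_simp])
          refine this.trans (le_of_eq ?_)
          congr 2
          field_simp)
      calc _ ≤ ENNReal.ofReal (ω t) * (Cu * (ENNReal.ofReal (R / ω t) * T)) := mul_le_mul_right h1 _
        _ = Cu * (ENNReal.ofReal (ω t) * ENNReal.ofReal (R / ω t)) * T := by ring
        _ = Cu * ENNReal.ofReal R * T := by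
            rw [← ENNReal.ofReal_mul hw.le, mul_div_cancel₀ _ hw.ne']
        _ ≤ _ := mul_le_mul_left le_add_self _)
  have E1 : normK N0 N1 θ r a f = LqNorm r (Ioi 0) (fun u => ENNReal.ofReal (u ^ (-(r⁻¹.toReal))) *
      (ENNReal.ofReal (u ^ (-θ) * a u) * Kf N0 N1 u f)) := by
    have key : ∀ u ∈ Ioi (0:ℝ), ENNReal.ofReal (u ^ (-θ - r⁻¹.toReal) * a u) * Kf N0 N1 u f =
        ENNReal.ofReal (u ^ (-(r⁻¹.toReal))) * (ENNReal.ofReal (u ^ (-θ) * a u) * Kf N0 N1 u f) := by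
      intro u hu
      have hu : 0 < u := hu
      rw [← mul_assoc, ← ENNReal.ofReal_mul (by positivity), sub_eq_add_neg, Real.rpow_add hu]
      congr 2
      ring
    exact le_antisymm (LqNorm_mono measurableSet_Ioi fun u hu => (key u hu).le)
      (LqNorm_mono measurableSet_Ioi fun u hu => (key u hu).ge)
  have E2 : normK A₀.N A₁.N (θ * θ₁) r (fun t => c₀ t ^ (1 - θ) * c₁ t ^ θ * a (ρ t)) f =
      LqNorm r (Ioi 0) (fun u => ENNReal.ofReal (u ^ (-(r⁻¹.toReal))) *
      (ENNReal.ofReal (ω u * c₀ u) * Kf A₀.N A₁.N u f)) := by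
    have key : ∀ u ∈ Ioi (0:ℝ), ENNReal.ofReal (u ^ (-(θ * θ₁) - r⁻¹.toReal) *
          (c₀ u ^ (1 - θ) * c₁ u ^ θ * a (ρ u))) * Kf A₀.N A₁.N u f =
        ENNReal.ofReal (u ^ (-(r⁻¹.toReal))) * (ENNReal.ofReal (ω u * c₀ u) * Kf A₀.N A₁.N u f) := by
      intro u hu
      have hu : 0 < u := hu
      have hcu := hd₀S.pos u hu
      have hc1u : 0 < c₁ u := by
        rw [hc₁']; exact mul_pos (ha₁.pos u hu) (hd₁S.pos u hu)
      have e : ρ u ^ (-θ) = u ^ (-(θ * θ₁)) * (c₀ u ^ (-θ) * c₁ u ^ θ) := by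
        rw [hρ, Real.mul_rpow (by positivity) (by positivity), ← Real.rpow_mul hu.le,
          Real.div_rpow hcu.le hc1u.le, Real.rpow_neg hc1u.le, div_inv_eq_mul]
        congr 2
        ring
      rw [← mul_assoc (ENNReal.ofReal (u ^ (-(r⁻¹.toReal)))), ← ENNReal.ofReal_mul (by positivity), sub_eq_add_neg, Real.rpow_add hu]
      congr 2
      rw [hω]
      simp only
      rw [e, show 1 - θ = -θ + 1 by ring, Real.rpow_add hcu, Real.rpow_one]
      ring
    exact le_antisymm (LqNorm_mono measurableSet_Ioi fun u hu => (key u hu).le)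
      (LqNorm_mono measurableSet_Ioi fun u hu => (key u hu).ge)
  rw [E1, E2]
  refine ⟨?_, hfin1⟩
  rw [ENNReal.inv_mul_le_iff (lt_of_lt_of_le one_pos hC1).ne' hC2]
  exact hfin2


end
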